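/- For every integer r ≥ 2 and every subset 𝒫 ⊂ R^(r) with |𝒫| = 2^(r−1) − 1 (that is, 𝒫 consists of all r-partite r-patterns except one), asymptotically almost surely z_𝒫(RM_n^(r)) = Θ(n^(1−1/r)); that is, there exist constants c₁, c₂ > 0 (depending only on r and 𝒫) such that the probability that c₁·n^(1−1/r) ≤ z_𝒫(RM_n^(r)) ≤ c₂·n^(1−1/r) tends to 1 as n → ∞. -/

import Mathlib

open Finset
open scoped Classical

/-- An ordered `r`-matching of size `n`: a partition of `[r*n] = {1,…,r*n}` into `n`
pairwise disjoint `r`-element subsets (the edges). -/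
def IsOrderedMatching (r n : ℕ) (M : Finset (Finset ℕ)) : Prop :=
  M.card = n ∧ (∀ e ∈ M, e.card = r) ∧
  (∀ e ∈ M, ∀ f ∈ M, e ≠ f → Disjoint e f) ∧
  M.biUnion id = Finset.Icc 1 (r * n)

/-- Two disjoint `r`-element sets `e`, `f` form the `r`-pattern `P`: the unique
order-preserving bijection from `e ∪ f` onto `[2r]` maps the pair `{e, f}` onto `P`. -/
def FormsPattern (r : ℕ) (e f : Finset ℕ) (P : Finset (Finset ℕ)) : Prop :=
  ∃ φ : ℕ → ℕ, StrictMonoOn φ ↑(e ∪ f) ∧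
    (e ∪ f).image φ = Finset.Icc 1 (2 * r) ∧
    ({e.image φ, f.image φ} : Finset (Finset ℕ)) = P

/-- A `Ps`-clique: a family of pairwise disjoint `r`-element subsets of `ℕ`, every two of
which form a pattern belonging to `Ps`. -/
def IsClique (r : ℕ) (Ps : Set (Finset (Finset ℕ))) (K : Finset (Finset ℕ)) : Prop :=
  (∀ e ∈ K, e.card = r) ∧ (∀ e ∈ K, ∀ f ∈ K, e ≠ f → Disjoint e f) ∧
  (∀ e ∈ K, ∀ f ∈ K, e ≠ f → ∃ P ∈ Ps, FormsPattern r e f P)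

/-- `z_Ps(M)`: the maximum size of a subfamily of `M` that is a `Ps`-clique. -/
noncomputable def zClique (r : ℕ) (Ps : Set (Finset (Finset ℕ))) (M : Finset (Finset ℕ)) : ℕ :=
  sSup {k | ∃ K : Finset (Finset ℕ), K ⊆ M ∧ IsClique r Ps K ∧ K.card = k}

/-- All ordered `r`-matchings of size `n` (as a finset). -/
noncomputable def matchingFamilies (r n : ℕ) : Finset (Finset (Finset ℕ)) :=
  ((Finset.Icc 1 (r * n)).powerset.powerset).filter (IsOrderedMatching r n)

/-- The probability of the event `A` for a uniformly random ordered `r`-matching of size `n`. -/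
noncomputable def prob (r n : ℕ) (A : Finset (Finset ℕ) → Prop) : ℝ :=
  (((matchingFamilies r n).filter A).card : ℝ) / ((matchingFamilies r n).card : ℝ)

/-- Expectation of `X` with respect to a uniformly random ordered `r`-matching of size `n`. -/
noncomputable def expect (r n : ℕ) (X : Finset (Finset ℕ) → ℝ) : ℝ :=
  (∑ M ∈ matchingFamilies r n, X M) / ((matchingFamilies r n).card : ℝ)

/-- An `r`-partite `r`-pattern: each edge contains exactly one of `{2i-1, 2i}` for each
`i = 1, …, r`. -/
def IsPartitePattern (r : ℕ) (P : Finset (Finset ℕ)) : Prop :=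
  IsOrderedMatching r 2 P ∧
  ∀ e ∈ P, ∀ i ∈ Finset.Icc 1 r, (e ∩ {2 * i - 1, 2 * i}).card = 1

/-- An `r`-pattern `P` is collectable if there exist arbitrarily large `{P}`-cliques. -/
def Collectable (r : ℕ) (P : Finset (Finset ℕ)) : Prop :=
  ∀ k : ℕ, ∃ K : Finset (Finset ℕ), IsClique r {P} K ∧ K.card = k

/-- The word of a pattern `P` over `{A=true, B=false}`: the `j`-th letter is `true` iff
vertex `j` lies in the edge of `P` containing `1`. -/
noncomputable def patternWord (r : ℕ) (P : Finset (Finset ℕ)) : List Bool :=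
  (List.range (2 * r)).map (fun j => decide (∃ e ∈ P, 1 ∈ e ∧ j + 1 ∈ e))

/-- `lam` is a splitting of the word `w` into consecutive blocks of the form
`A^t B^t` or `B^t A^t` with half-lengths given by `lam`. -/
def IsBlockSplitting (w : List Bool) (lam : List ℕ) : Prop :=
  (∀ t ∈ lam, 1 ≤ t) ∧
  ∃ bs : List Bool, bs.length = lam.length ∧
    w = (List.zipWith (fun t b => List.replicate t b ++ List.replicate t !b) lam bs).flatten

/-- The pattern `P` has composition `lam` (the sequence of half-lengths of the blocks of
its unique splitting). -/
def HasComposition (r : ℕ) (P : Finset (Finset ℕ)) (lam : List ℕ) : Prop :=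
  IsBlockSplitting (patternWord r P) lam

/-- Two distinct collectable `r`-patterns are harmonious if they have the same composition. -/
def Harmonious (r : ℕ) (P Q : Finset (Finset ℕ)) : Prop :=
  P ≠ Q ∧ Collectable r P ∧ Collectable r Q ∧
  ∃ lam : List ℕ, HasComposition r P lam ∧ HasComposition r Q lam

/-- A pair of distinct `r`-patterns is a mismatch if exactly one of them is collectable, or
both are collectable but their compositions differ. -/
def Mismatch (r : ℕ) (P Q : Finset (Finset ℕ)) : Prop :=
  P ≠ Q ∧
  ((Collectable r P ∧ ¬ Collectable r Q) ∨
   (¬ Collectable r P ∧ Collectable r Q) ∨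
   (Collectable r P ∧ Collectable r Q ∧
     ¬ ∃ lam : List ℕ, HasComposition r P lam ∧ HasComposition r Q lam))

/-- The trace of an ordered `r`-matching of size `k` on `[rk]`: the `j`-th letter equals
`i` when `j` is the `i`-th smallest element of the edge containing `j`. -/
noncomputable def trace (r k : ℕ) (M : Finset (Finset ℕ)) : List ℕ :=
  (List.range (r * k)).map (fun j₀ =>
    ((Finset.Icc 1 (r * k)).filter
      (fun x => x ≤ j₀ + 1 ∧ ∃ e ∈ M, j₀ + 1 ∈ e ∧ x ∈ e)).card)

/-- `a_Ps(k)`: the number of `Ps`-cliques of size `k` whose edges partition `[rk]`. -/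
noncomputable def cliqueCount (r : ℕ) (Ps : Set (Finset (Finset ℕ))) (k : ℕ) : ℕ :=
  (((Finset.Icc 1 (r * k)).powerset.powerset).filter
    (fun M => IsOrderedMatching r k M ∧ IsClique r Ps M)).card

/-- The maximum size of any `Ps`-clique whatsoever. -/
noncomputable def maxCliqueSize (r : ℕ) (Ps : Set (Finset (Finset ℕ))) : ℕ :=
  sSup {k | ∃ K : Finset (Finset ℕ), IsClique r Ps K ∧ K.card = k}

/-- `M` contains a copy of the ordered `r`-matching `H` of size `k`: a subfamily `N ⊆ M` of
`k` edges such that the order-preserving bijection from the union of the edges of `N`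
onto `[rk]` maps `N` onto `H`. -/
def ContainsCopy (r k : ℕ) (H M : Finset (Finset ℕ)) : Prop :=
  ∃ N ⊆ M, N.card = k ∧ ∃ φ : ℕ → ℕ,
    StrictMonoOn φ ↑(N.biUnion id) ∧
    (N.biUnion id).image φ = Finset.Icc 1 (r * k) ∧
    N.image (fun e => e.image φ) = H

/-- Delete the `j`-th smallest element of the finite set `e`. -/
def deleteJth (j : ℕ) (e : Finset ℕ) : Finset ℕ :=
  e.filter (fun x => (e.filter (· ≤ x)).card ≠ j)

/-- Relabel the elements of `e` order-preservingly by their ranks in `V`. -/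
def relabel (V : Finset ℕ) (e : Finset ℕ) : Finset ℕ :=
  e.image (fun x => (V.filter (· ≤ x)).card)

/-- `S^(−j)`: delete from each edge of the pattern `S` its `j`-th smallest element and
relabel the remaining vertices order-preservingly. -/
def patternDelete (j : ℕ) (S : Finset (Finset ℕ)) : Finset (Finset ℕ) :=
  (S.image (deleteJth j)).image (relabel ((S.image (deleteJth j)).biUnion id))

/-!
A pair of edges in an `r`-partite pattern is described, up to complement, by the signs telling which
of the two `i`-th vertices is smaller; omitting one pattern omits one class of signs `s`.

Split `[rn]` into about `n ^ (1 / r)` intervals, hence the possible edges into a grid of cells, and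
reverse the coordinates where `s` is negative. If a clique avoids the pattern of `s`, no two of its
edges lie in cells that are strictly ordered in all coordinates, so it occupies only the boundary
cells of a lower set of the grid. There are at most `4 ^ m ^ (r - 1)` lower sets of an
`m × ⋯ × m` grid, and the boundary region of each has `O(n ^ (1 - 1 / r))` edges of the matching on
average. A tail bound that is exponential in `n ^ (1 - 1 / r)` therefore survives the union bound.

Conversely, choosing one matching edge in each occupied cell of an antichain gives a clique. By the
second moment method a region made of `m ^ (r - 1)` pairwise incomparable cells contains
`Ω(n ^ (1 - 1 / r))` edges of the matching, and the same tail bound, applied to the subfamilies of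
that antichain, shows that these edges cannot be packed into few cells.
-/

section Vertices

variable {r : ℕ} {e : Finset ℕ}

/-- The vertices of an `r`-element set in increasing order, indexed from `0`; the junk value is
`0` when `e` does not have `r` elements. -/
noncomputable def vertex (r : ℕ) (e : Finset ℕ) : Fin r → ℕ :=
  if h : e.card = r then e.orderEmbOfFin h else 0

lemma vertex_of_card_eq (he : e.card = r) : vertex r e = e.orderEmbOfFin he := dif_pos he

lemma vertex_strictMono (he : e.card = r) : StrictMono (vertex r e) :=
  vertex_of_card_eq he ▸ (e.orderEmbOfFin he).strictMono

lemma vertex_mem (he : e.card = r) (i : Fin r) : vertex r e i ∈ e :=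
  vertex_of_card_eq he ▸ e.orderEmbOfFin_mem he i

lemma image_vertex (he : e.card = r) : univ.image (vertex r e) = e := by
  rw [vertex_of_card_eq he, image_orderEmbOfFin_univ]

lemma vertex_image {x : Fin r → ℕ} (hx : StrictMono x) : vertex r (univ.image x) = x := by
  have hcard : (univ.image x).card = r := by
    rw [card_image_of_injective _ hx.injective, card_univ, Fintype.card_fin]
  rw [vertex_of_card_eq hcard]
  exact (orderEmbOfFin_unique hcard (fun i => mem_image_of_mem x (mem_univ i)) hx).symm

lemma vertex_image_of_strictMonoOn {φ : ℕ → ℕ} (he : e.card = r) (hφ : StrictMonoOn φ ↑e) :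
    vertex r (e.image φ) = φ ∘ vertex r e := by
  have hmono : StrictMono (φ ∘ vertex r e) := fun i j hij =>
    hφ (vertex_mem he i) (vertex_mem he j) (vertex_strictMono he hij)
  rw [← vertex_image hmono, ← image_image, image_vertex he]

lemma vertex_ne_vertex {f : Finset ℕ} (he : e.card = r) (hf : f.card = r) (hef : Disjoint e f)
    (i j : Fin r) : vertex r e i ≠ vertex r f j :=
  hef.forall_ne_finset (vertex_mem he i) (vertex_mem hf j)

lemma card_filter_eq_card_filter_vertex (he : e.card = r) (p : ℕ → Prop)
    [DecidablePred p] : #{v ∈ e | p v} = #{i | p (vertex r e i)} := by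
  conv_lhs => rw [← image_vertex he, filter_image]
  exact card_image_of_injective _ (vertex_strictMono he).injective

end Vertices

section SignPatterns

variable {r : ℕ}

/-- The edge of an `r`-partite pattern with sign vector `s`: it takes the smaller element of the
`i`-th pair `{2i+1, 2i+2}` when `s i` holds, and the larger one otherwise. -/
def signVertex (s : Fin r → Bool) (i : Fin r) : ℕ := 2 * i + if s i then 1 else 2

/-- The vertex set of the edge with vertices `signVertex s`. -/
def signSet (s : Fin r → Bool) : Finset ℕ := univ.image (signVertex s)

/-- The `r`-partite pattern encoded by `s`; the complementary sign vector encodes the same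
pattern. -/
def signPattern (s : Fin r → Bool) : Finset (Finset ℕ) := {signSet s, signSet sᶜ}

/-- The sign vector recording in which coordinates `e` lies below `f`. -/
noncomputable def relSign (r : ℕ) (e f : Finset ℕ) : Fin r → Bool :=
  fun i => decide (vertex r e i < vertex r f i)

lemma signVertex_strictMono (s : Fin r → Bool) : StrictMono (signVertex s) := by
  intro i j (hij : (i : ℕ) < j)
  unfold signVertex
  split_ifs <;> omega

lemma signVertex_lt_compl (s : Fin r → Bool) (i : Fin r) :
    signVertex s i < signVertex sᶜ i ↔ s i = true := by
  cases h : s i <;> simp [signVertex, h]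

lemma vertex_signSet (s : Fin r → Bool) : vertex r (signSet s) = signVertex s :=
  vertex_image (signVertex_strictMono s)

lemma signSet_injective : Function.Injective (signSet : (Fin r → Bool) → Finset ℕ) := by
  intro s t hst
  funext i
  have h : signVertex s i = signVertex t i := by rw [← vertex_signSet, hst, vertex_signSet]
  cases hs : s i <;> cases ht : t i <;> simp_all [signVertex]

lemma mem_signSet {s : Fin r → Bool} {v : ℕ} :
    v ∈ signSet s ↔ ∃ i : Fin r, v = 2 * i + if s i then 1 else 2 := by
  simp only [signSet, signVertex, mem_image, mem_univ, true_and, eq_comm]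

lemma signSet_union_compl (s : Fin r → Bool) : signSet s ∪ signSet sᶜ = Icc 1 (2 * r) := by
  ext v
  simp only [mem_union, mem_signSet, mem_Icc]
  constructor
  · rintro (⟨i, rfl⟩ | ⟨i, rfl⟩) <;> split_ifs <;> omega
  · intro hv
    have hi : (v - 1) / 2 < r := by omega
    cases hs : s ⟨(v - 1) / 2, hi⟩ <;> rcases Nat.mod_two_eq_zero_or_one v with hpar | hpar
    · exact .inl ⟨⟨_, hi⟩, by simp [hs]; omega⟩
    · exact .inr ⟨⟨_, hi⟩, by simp [hs]; omega⟩
    · exact .inr ⟨⟨_, hi⟩, by simp [hs]; omega⟩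
    · exact .inl ⟨⟨_, hi⟩, by simp [hs]; omega⟩

lemma relSign_signSet_compl (s : Fin r → Bool) : relSign r (signSet s) (signSet sᶜ) = s := by
  funext i
  rw [relSign, vertex_signSet, vertex_signSet, Bool.eq_iff_iff, decide_eq_true_iff,
    signVertex_lt_compl]

lemma signPattern_compl (s : Fin r → Bool) : signPattern sᶜ = signPattern s := by
  rw [signPattern, signPattern, compl_compl, pair_comm]

lemma pair_eq_signPattern_iff {A B : Finset ℕ} {s : Fin r → Bool} :
    {A, B} = signPattern s ↔
      A = signSet s ∧ B = signSet sᶜ ∨ A = signSet sᶜ ∧ B = signSet s := by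
  rw [signPattern, ← coe_inj, coe_pair, coe_pair, Set.pair_eq_pair_iff]

lemma signPattern_eq_iff {s t : Fin r → Bool} :
    signPattern s = signPattern t ↔ s = t ∨ s = tᶜ := by
  constructor
  · intro h
    rcases pair_eq_signPattern_iff.1 h with h | h
    · exact .inl (signSet_injective h.1)
    · exact .inr (signSet_injective h.1)
  · rintro (rfl | rfl)
    · rfl
    · exact signPattern_compl t

lemma exists_signSet_eq {A : Finset ℕ} (hA : A ⊆ Icc 1 (2 * r))
    (hpair : ∀ i ∈ Icc 1 r, #(A ∩ {2 * i - 1, 2 * i}) = 1) :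
    ∃ s : Fin r → Bool, A = signSet s := by
  have hxor : ∀ i : Fin r, 2 * (i : ℕ) + 2 ∈ A ↔ 2 * (i : ℕ) + 1 ∉ A := by
    intro i
    have h := hpair (i + 1) (mem_Icc.2 ⟨by omega, i.2⟩)
    rw [show 2 * ((i : ℕ) + 1) - 1 = 2 * i + 1 by omega, inter_comm,
      show 2 * ((i : ℕ) + 1) = 2 * i + 2 by omega] at h
    by_cases h1 : 2 * (i : ℕ) + 1 ∈ A <;> by_cases h2 : 2 * (i : ℕ) + 2 ∈ A <;>
      simp_all [insert_inter_of_mem, insert_inter_of_notMem, singleton_inter_of_mem]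
  refine ⟨fun i => decide (2 * (i : ℕ) + 1 ∈ A), ?_⟩
  ext v
  rw [mem_signSet]
  constructor
  · intro hv
    obtain ⟨hv1, hv2⟩ := mem_Icc.1 (hA hv)
    have hi : (v - 1) / 2 < r := by omega
    refine ⟨⟨(v - 1) / 2, hi⟩, ?_⟩
    have hx := hxor ⟨(v - 1) / 2, hi⟩
    dsimp only at hx ⊢
    rcases (show v = 2 * ((v - 1) / 2) + 1 ∨ v = 2 * ((v - 1) / 2) + 2 by omega) with h | h
    · rw [← h]; simp [hv, ← h]
    · rw [← h] at hx; simpa [hx.1 hv] using h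
  · rintro ⟨i, rfl⟩
    by_cases h : 2 * (i : ℕ) + 1 ∈ A
    · simp [h]
    · simpa [h] using (hxor i).2 h

lemma eq_compl_of_disjoint_signSet {s t : Fin r → Bool} (h : Disjoint (signSet s) (signSet t)) :
    t = sᶜ := by
  funext i
  have hne : signVertex s i ≠ signVertex t i :=
    h.forall_ne_finset (mem_image_of_mem _ (mem_univ i)) (mem_image_of_mem _ (mem_univ i))
  cases hs : s i <;> cases ht : t i <;> simp_all [signVertex]

lemma IsPartitePattern.exists_eq_signPattern {P : Finset (Finset ℕ)} (hP : IsPartitePattern r P) :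
    ∃ s : Fin r → Bool, P = signPattern s := by
  obtain ⟨⟨hcard, -, hdisj, hunion⟩, hpair⟩ := hP
  obtain ⟨A, B, hAB, rfl⟩ := card_eq_two.1 hcard
  have hsub : ∀ X ∈ ({A, B} : Finset (Finset ℕ)), X ⊆ Icc 1 (2 * r) := fun X hX => by
    rw [mul_comm 2 r, ← hunion]
    exact subset_biUnion_of_mem id hX
  have hA : A ∈ ({A, B} : Finset (Finset ℕ)) := mem_insert_self A {B}
  have hB : B ∈ ({A, B} : Finset (Finset ℕ)) := mem_insert_of_mem (mem_singleton_self B)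
  obtain ⟨s, rfl⟩ := exists_signSet_eq (hsub A hA) (hpair A hA)
  obtain ⟨t, rfl⟩ := exists_signSet_eq (hsub B hB) (hpair B hB)
  exact ⟨s, by rw [eq_compl_of_disjoint_signSet (hdisj _ hA _ hB hAB), signPattern]⟩

lemma two_mul_card_image_signPattern (hr : 0 < r) :
    2 * #(univ.image (signPattern : (Fin r → Bool) → Finset (Finset ℕ))) = 2 ^ r := by
  have : Nonempty (Fin r) := ⟨⟨0, hr⟩⟩
  have hfiber : ∀ P ∈ univ.image (signPattern : (Fin r → Bool) → Finset (Finset ℕ)),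
      #{t | signPattern (r := r) t = P} = 2 := by
    intro P hP
    obtain ⟨s, -, rfl⟩ := mem_image.1 hP
    rw [← card_pair (ne_compl_self (a := s))]
    congr 1
    ext t
    simp only [mem_filter, mem_univ, true_and, mem_insert, mem_singleton, signPattern_eq_iff]
  have hsum := card_eq_sum_card_image (signPattern : (Fin r → Bool) → Finset (Finset ℕ)) univ
  rw [sum_congr rfl hfiber, sum_const, smul_eq_mul, card_univ, Fintype.card_fun,
    Fintype.card_bool, Fintype.card_fin] at hsum
  rw [mul_comm, hsum]

lemma exists_unique_missing_signPattern (hr : 0 < r) {Ps : Finset (Finset (Finset ℕ))}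
    (hPs : ∀ P ∈ Ps, IsPartitePattern r P) (hcard : Ps.card = 2 ^ (r - 1) - 1) :
    ∃ s : Fin r → Bool, ∀ t : Fin r → Bool,
      signPattern t ∈ Ps ↔ signPattern t ≠ signPattern s := by
  set R := univ.image (signPattern : (Fin r → Bool) → Finset (Finset ℕ))
  have hsub : Ps ⊆ R := fun P hP => by
    obtain ⟨t, rfl⟩ := (hPs P hP).exists_eq_signPattern
    exact mem_image_of_mem _ (mem_univ t)
  have hR : R.card = 2 ^ (r - 1) := by
    have h := two_mul_card_image_signPattern hr
    rwa [← mul_pow_sub_one hr.ne', Nat.mul_left_cancel_iff two_pos] at h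
  have hmissing : #(R \ Ps) = 1 := by
    have := Nat.two_pow_pos (r - 1)
    rw [card_sdiff_of_subset hsub, hR, hcard]
    omega
  obtain ⟨P, hP⟩ := card_eq_one.1 hmissing
  obtain ⟨s, -, rfl⟩ := mem_image.1 (mem_sdiff.1 (hP ▸ mem_singleton_self P)).1
  refine ⟨s, fun t => ?_⟩
  have ht : signPattern t ∈ R \ Ps ↔ signPattern t = signPattern s := by
    rw [hP, mem_singleton]
  rw [mem_sdiff, and_iff_right (mem_image_of_mem _ (mem_univ t))] at ht
  exact not_iff_not.1 (ht.trans not_ne_iff.symm)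

end SignPatterns

section FormsPattern

variable {r : ℕ} {e f : Finset ℕ}

lemma FormsPattern.signPattern_eq {s : Fin r → Bool} (he : e.card = r) (hf : f.card = r)
    (h : FormsPattern r e f (signPattern s)) : signPattern s = signPattern (relSign r e f) := by
  obtain ⟨φ, hφ, -, himage⟩ := h
  have relSign_eq : relSign r (e.image φ) (f.image φ) = relSign r e f := by
    funext i
    have he' := hφ.mono (coe_subset.2 (subset_union_left (s₂ := f)))
    have hf' := hφ.mono (coe_subset.2 (subset_union_right (s₁ := e)))
    simp only [relSign, vertex_image_of_strictMonoOn he he', vertex_image_of_strictMonoOn hf hf',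
      Function.comp_apply]
    rw [decide_eq_decide]
    exact hφ.lt_iff_lt (mem_union_left f (vertex_mem he i)) (mem_union_right e (vertex_mem hf i))
  rcases pair_eq_signPattern_iff.1 himage with ⟨hA, hB⟩ | ⟨hA, hB⟩
  · rw [← relSign_eq, hA, hB, relSign_signSet_compl]
  · have h := relSign_signSet_compl sᶜ
    rw [compl_compl] at h
    rw [← relSign_eq, hA, hB, h, signPattern_compl]

lemma relSign_swap (he : e.card = r) (hf : f.card = r) (hef : Disjoint e f) :
    relSign r f e = (relSign r e f)ᶜ := by
  funext i
  have := vertex_ne_vertex he hf hef i i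
  simp only [relSign, Pi.compl_apply, Bool.compl_eq_bnot, ← decide_not, decide_eq_decide]
  omega

lemma strictMonoOn_rank (V : Finset ℕ) : StrictMonoOn (fun v => #{w ∈ V | w ≤ v}) ↑V := by
  intro u _ v hv huv
  refine card_lt_card (ssubset_iff_of_subset ?_ |>.2 ⟨v, ?_, ?_⟩)
  · exact monotone_filter_right V fun w _ hw => hw.trans huv.le
  · exact mem_filter.2 ⟨hv, le_rfl⟩
  · exact fun hmem => (mem_filter.1 hmem).2.not_gt huv

lemma image_rank_eq_signSet (he : e.card = r) (hf : f.card = r) (hef : Disjoint e f)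
    (hlow : ∀ i j : Fin r, i < j → vertex r e i < vertex r f j)
    (hhigh : ∀ i j : Fin r, i < j → vertex r f i < vertex r e j) :
    e.image (fun v => #{w ∈ e ∪ f | w ≤ v}) = signSet (relSign r e f) := by
  suffices h : ∀ i, #{w ∈ e ∪ f | w ≤ vertex r e i} = signVertex (relSign r e f) i by
    calc e.image (fun v => #{w ∈ e ∪ f | w ≤ v})
        = (univ.image (vertex r e)).image (fun v => #{w ∈ e ∪ f | w ≤ v}) := by
          rw [image_vertex he]
      _ = signSet (relSign r e f) := image_image.trans (image_congr fun i _ => h i)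
  intro i
  have hsame : #{w ∈ e | w ≤ vertex r e i} = i + 1 := by
    rw [card_filter_eq_card_filter_vertex he]
    simp only [(vertex_strictMono he).le_iff_le, filter_ge_eq_Iic, Fin.card_Iic]
  have hother : #{w ∈ f | w ≤ vertex r e i} = i + if relSign r e f i then 0 else 1 := by
    rw [card_filter_eq_card_filter_vertex hf]
    have := vertex_ne_vertex he hf hef i i
    by_cases hi : vertex r e i < vertex r f i
    · rw [relSign, decide_eq_true hi, if_pos rfl, add_zero, ← Fin.card_Iio]
      congr 1
      ext j
      have := hlow i j
      have := hhigh j i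
      rcases lt_trichotomy i j with h | rfl | h <;> simp <;> grind
    · rw [relSign, decide_eq_false hi, if_neg Bool.false_ne_true, ← Fin.card_Iic]
      congr 1
      ext j
      have := hlow i j
      have := hhigh j i
      rcases lt_trichotomy i j with h | rfl | h <;> simp <;> grind
  rw [filter_union, card_union_of_disjoint (disjoint_filter_filter hef), hsame, hother, signVertex]
  split_ifs <;> ring

lemma formsPattern_relSign (he : e.card = r) (hf : f.card = r) (hef : Disjoint e f)
    (hlow : ∀ i j : Fin r, i < j → vertex r e i < vertex r f j)
    (hhigh : ∀ i j : Fin r, i < j → vertex r f i < vertex r e j) :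
    FormsPattern r e f (signPattern (relSign r e f)) := by
  have himage_e := image_rank_eq_signSet he hf hef hlow hhigh
  have himage_f := image_rank_eq_signSet hf he hef.symm hhigh hlow
  rw [union_comm, relSign_swap he hf hef] at himage_f
  refine ⟨fun v => #{w ∈ e ∪ f | w ≤ v}, strictMonoOn_rank _, ?_, ?_⟩
  · rw [image_union, himage_e, himage_f, signSet_union_compl]
  · rw [himage_e, himage_f, signPattern]

end FormsPattern

section CliqueNumber

variable {r : ℕ} {Ps : Set (Finset (Finset ℕ))} {M K : Finset (Finset ℕ)}

lemma IsClique.card_le_zClique (hK : IsClique r Ps K) (hKM : K ⊆ M) :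
    K.card ≤ zClique r Ps M := by
  refine le_csSup ⟨M.card, ?_⟩ ⟨K, hKM, hK, rfl⟩
  rintro _ ⟨K', hK', -, rfl⟩
  exact card_le_card hK'

variable (r Ps M) in
lemma exists_isClique_card_eq_zClique : ∃ K ⊆ M, IsClique r Ps K ∧ K.card = zClique r Ps M := by
  refine Nat.sSup_mem (s := {k | ∃ K ⊆ M, IsClique r Ps K ∧ K.card = k})
    ⟨0, ∅, by simp [IsClique]⟩ ⟨M.card, ?_⟩
  rintro _ ⟨K', hK', -, rfl⟩
  exact card_le_card hK'

end CliqueNumber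

section Matchings

variable {r n : ℕ} {U V : Finset ℕ} {M N G : Finset (Finset ℕ)}

/-- The partitions of a finite set `V` of vertices into `r`-element edges. -/
noncomputable def matchingsOn (r : ℕ) (V : Finset ℕ) : Finset (Finset (Finset ℕ)) :=
  {M ∈ V.powerset.powerset | (∀ e ∈ M, e.card = r) ∧
    (M : Set (Finset ℕ)).PairwiseDisjoint id ∧ M.biUnion id = V}

lemma mem_matchingsOn : M ∈ matchingsOn r V ↔
    (∀ e ∈ M, e.card = r) ∧ (M : Set (Finset ℕ)).PairwiseDisjoint id ∧ M.biUnion id = V := by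
  simp only [matchingsOn, mem_filter, mem_powerset, and_iff_right_iff_imp]
  rintro ⟨-, -, rfl⟩ e he
  exact mem_powerset.2 (subset_biUnion_of_mem id he)

lemma subset_of_mem_matchingsOn (hM : M ∈ matchingsOn r V) {e : Finset ℕ} (he : e ∈ M) :
    e ⊆ V :=
  (mem_matchingsOn.1 hM).2.2 ▸ subset_biUnion_of_mem id he

lemma card_of_mem_matchingsOn (hM : M ∈ matchingsOn r V) : V.card = r * M.card := by
  obtain ⟨hcard, hdisj, rfl⟩ := mem_matchingsOn.1 hM
  rw [card_biUnion hdisj, mul_comm]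
  exact sum_const_nat hcard

lemma mem_matchingFamilies : M ∈ matchingFamilies r n ↔ IsOrderedMatching r n M := by
  simp only [matchingFamilies, mem_filter, mem_powerset, and_iff_right_iff_imp]
  rintro ⟨-, -, -, hunion⟩ e he
  exact mem_powerset.2 (hunion ▸ subset_biUnion_of_mem id he)

lemma matchingFamilies_eq_matchingsOn (hr : 0 < r) :
    matchingFamilies r n = matchingsOn r (Icc 1 (r * n)) := by
  ext M
  rw [mem_matchingFamilies]
  refine ⟨fun h => mem_matchingsOn.2 h.2, fun h => ⟨?_, mem_matchingsOn.1 h⟩⟩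
  have hcard := card_of_mem_matchingsOn h
  rw [Nat.card_Icc, Nat.add_sub_cancel] at hcard
  exact (Nat.eq_of_mul_eq_mul_left hr hcard).symm

lemma mem_matchingsOn_biUnion_of_subset (hM : M ∈ matchingsOn r V) (hG : G ⊆ M) :
    G ∈ matchingsOn r (G.biUnion id) := by
  obtain ⟨hcard, hdisj, -⟩ := mem_matchingsOn.1 hM
  exact mem_matchingsOn.2 ⟨fun e he => hcard e (hG he), hdisj.subset (coe_subset.2 hG), rfl⟩

lemma singleton_mem_matchingsOn (hV : V.card = r) : {V} ∈ matchingsOn r V :=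
  mem_matchingsOn.2 ⟨by simpa using hV, by simp, singleton_biUnion⟩

lemma union_mem_matchingsOn (hM : M ∈ matchingsOn r V) (hN : N ∈ matchingsOn r U)
    (hVU : Disjoint V U) : M ∪ N ∈ matchingsOn r (V ∪ U) := by
  obtain ⟨hcard, hdisj, hunion⟩ := mem_matchingsOn.1 hM
  obtain ⟨hcard', hdisj', hunion'⟩ := mem_matchingsOn.1 hN
  refine mem_matchingsOn.2 ⟨?_, ?_, by rw [union_biUnion, hunion, hunion']⟩
  · rintro e he
    exact (mem_union.1 he).elim (hcard e) (hcard' e)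
  · rw [coe_union, Set.pairwiseDisjoint_union]
    exact ⟨hdisj, hdisj', fun e he f hf _ => disjoint_of_subset_left
      (subset_of_mem_matchingsOn hM he) (disjoint_of_subset_right
        (subset_of_mem_matchingsOn hN hf) hVU)⟩

lemma disjoint_of_mem_matchingsOn (hr : 0 < r) (hM : M ∈ matchingsOn r V)
    (hN : N ∈ matchingsOn r U) (hVU : Disjoint V U) : Disjoint M N := by
  refine disjoint_left.2 fun e he he' => ?_
  have hempty : e = ∅ := disjoint_self.1 (disjoint_of_subset_left
    (subset_of_mem_matchingsOn hM he) (disjoint_of_subset_right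
      (subset_of_mem_matchingsOn hN he') hVU))
  have := (mem_matchingsOn.1 hM).1 e he
  rw [hempty, card_empty] at this
  exact hr.ne this

lemma sdiff_mem_matchingsOn (hM : M ∈ matchingsOn r V) (hG : G ∈ matchingsOn r U) (hGM : G ⊆ M) :
    M \ G ∈ matchingsOn r (V \ U) := by
  obtain ⟨hcard, hdisj, rfl⟩ := mem_matchingsOn.1 hM
  obtain ⟨-, -, rfl⟩ := mem_matchingsOn.1 hG
  refine mem_matchingsOn.2 ⟨fun e he => hcard e (mem_sdiff.1 he).1,
    hdisj.subset (coe_subset.2 sdiff_subset), ?_⟩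
  ext v
  simp only [mem_biUnion, mem_sdiff, id]
  constructor
  · rintro ⟨e, ⟨he, heG⟩, hv⟩
    refine ⟨⟨e, he, hv⟩, ?_⟩
    rintro ⟨f, hf, hvf⟩
    exact disjoint_left.1 (hdisj he (hGM hf) fun hef => heG (hef ▸ hf)) hv hvf
  · rintro ⟨⟨e, he, hv⟩, hvG⟩
    exact ⟨e, ⟨he, fun heG => hvG ⟨e, heG, hv⟩⟩, hv⟩

lemma card_filter_superset_matchingsOn (hr : 0 < r) (hG : G ∈ matchingsOn r U) (hUV : U ⊆ V) :
    #{M ∈ matchingsOn r V | G ⊆ M} = #(matchingsOn r (V \ U)) := by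
  refine card_nbij' (· \ G) (· ∪ G) ?_ ?_ ?_ ?_
  · intro M hM
    obtain ⟨hM, hGM⟩ := mem_filter.1 hM
    exact sdiff_mem_matchingsOn hM hG hGM
  · intro N hN
    refine mem_filter.2 ⟨?_, subset_union_right⟩
    simpa only [sdiff_union_of_subset hUV] using union_mem_matchingsOn hN hG sdiff_disjoint
  · exact fun M hM => sdiff_union_of_subset (mem_filter.1 hM).2
  · exact fun N hN => union_sdiff_cancel_right
      (disjoint_of_mem_matchingsOn hr hN hG sdiff_disjoint)

lemma add_one_mul_uniformBell_add_one (hr : 0 < r) (n : ℕ) :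
    (n + 1) * Nat.uniformBell (n + 1) r = ((n + 1) * r).choose r * Nat.uniformBell n r := by
  obtain ⟨k, rfl⟩ : ∃ k, r = k + 1 := ⟨r - 1, by omega⟩
  have h := Nat.add_one_mul_choose_eq (n * (k + 1) + k) k
  rw [Nat.uniformBell_succ_left, show n * (k + 1) + (k + 1) - 1 = n * (k + 1) + k by omega,
    Nat.add_sub_cancel, show (n + 1) * (k + 1) = n * (k + 1) + k + 1 by ring]
  refine Nat.eq_of_mul_eq_mul_right hr ?_
  linear_combination (Nat.uniformBell n (k + 1)) * h

lemma card_matchingsOn (hr : 0 < r) (hV : V.card = r * n) :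
    #(matchingsOn r V) = Nat.uniformBell n r := by
  induction n generalizing V with
  | zero =>
    obtain rfl : V = ∅ := card_eq_zero.1 hV
    rw [Nat.uniformBell_zero_left, card_eq_one]
    refine ⟨∅, eq_singleton_iff_unique_mem.2 ⟨mem_matchingsOn.2 (by simp), fun M hM => ?_⟩⟩
    have := card_of_mem_matchingsOn hM
    rw [card_empty, zero_eq_mul] at this
    exact card_eq_zero.1 (this.resolve_left hr.ne')
  | succ n ih =>
    have hcontaining : ∀ e ∈ powersetCard r V,
        #((matchingsOn r V).bipartiteAbove (· ∈ ·) e) = Nat.uniformBell n r := by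
      intro e he
      obtain ⟨heV, he⟩ := mem_powersetCard.1 he
      have hcard : #(V \ e) = r * n := by
        rw [card_sdiff_of_subset heV, hV, he, mul_add_one, Nat.add_sub_cancel]
      rw [← ih hcard, ← card_filter_superset_matchingsOn hr (singleton_mem_matchingsOn he) heV]
      simp only [bipartiteAbove, singleton_subset_iff]
    have hedges : ∀ M ∈ matchingsOn r V,
        #((powersetCard r V).bipartiteBelow (· ∈ ·) M) = n + 1 := by
      intro M hM
      have hMV : #M = n + 1 :=
        Nat.eq_of_mul_eq_mul_left hr ((card_of_mem_matchingsOn hM).symm.trans hV)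
      rw [← hMV, bipartiteBelow, filter_mem_eq_inter, inter_eq_right.2]
      exact fun e he => mem_powersetCard.2
        ⟨subset_of_mem_matchingsOn hM he, (mem_matchingsOn.1 hM).1 e he⟩
    have hdouble := card_mul_eq_card_mul (· ∈ ·) hcontaining hedges
    rw [card_powersetCard, hV, mul_comm r, ← add_one_mul_uniformBell_add_one hr,
      mul_comm (n + 1)] at hdouble
    exact (Nat.eq_of_mul_eq_mul_right n.succ_pos hdouble).symm

lemma card_matchingFamilies (hr : 0 < r) : #(matchingFamilies r n) = Nat.uniformBell n r := by
  rw [matchingFamilies_eq_matchingsOn hr, card_matchingsOn hr (Nat.card_Icc 1 (r * n))]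

lemma uniformBell_pos (hr : 0 < r) : 0 < Nat.uniformBell n r := by
  have h := Nat.factorial_pos (n * r)
  rw [← Nat.uniformBell_mul_eq n hr.ne'] at h
  exact Nat.pos_of_mul_pos_right (Nat.pos_of_mul_pos_right h)

lemma prob_eq_card_div (A : Finset (Finset ℕ) → Prop) [DecidablePred A] :
    prob r n A = #{M ∈ matchingFamilies r n | A M} / #(matchingFamilies r n) := by
  rw [prob]
  congr!

lemma prob_superset (hr : 0 < r) (hG : G ∈ matchingsOn r U) (hU : U ⊆ Icc 1 (r * n)) :
    prob r n (G ⊆ ·) = Nat.uniformBell (n - #G) r / Nat.uniformBell n r := by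
  have hcard : #(Icc 1 (r * n) \ U) = r * (n - #G) := by
    rw [card_sdiff_of_subset hU, card_of_mem_matchingsOn hG, Nat.card_Icc, Nat.add_sub_cancel,
      Nat.mul_sub]
  rw [prob_eq_card_div, card_matchingFamilies hr, matchingFamilies_eq_matchingsOn hr,
    card_filter_superset_matchingsOn hr hG hU, card_matchingsOn hr hcard]

end Matchings

section Probability

variable {r n : ℕ} {A B : Finset (Finset ℕ) → Prop} {X Y : Finset (Finset ℕ) → ℝ}

lemma prob_eq_expect_indicator [DecidablePred A] :
    prob r n A = expect r n (fun M => if A M then 1 else 0) := by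
  rw [prob, _root_.expect, sum_boole]
  congr!

lemma expect_mono (h : ∀ M ∈ matchingFamilies r n, X M ≤ Y M) : expect r n X ≤ expect r n Y :=
  div_le_div_of_nonneg_right (sum_le_sum h) (Nat.cast_nonneg _)

lemma expect_add : expect r n (fun M => X M + Y M) = expect r n X + expect r n Y := by
  simp only [_root_.expect, sum_add_distrib, add_div]

lemma expect_const_mul (c : ℝ) : expect r n (fun M => c * X M) = c * expect r n X := by
  simp only [_root_.expect, ← mul_sum, mul_div_assoc]

lemma expect_sum {ι : Type*} (S : Finset ι) (Z : ι → Finset (Finset ℕ) → ℝ) :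
    expect r n (fun M => ∑ i ∈ S, Z i M) = ∑ i ∈ S, expect r n (Z i) := by
  simp only [_root_.expect]
  rw [sum_comm, sum_div]

lemma expect_const (hr : 0 < r) (c : ℝ) : expect r n (fun _ => c) = c := by
  have h : (0 : ℝ) < #(matchingFamilies r n) := by
    rw [card_matchingFamilies hr]
    exact_mod_cast uniformBell_pos hr
  rw [_root_.expect, sum_const, nsmul_eq_mul, mul_div_cancel_left₀ _ h.ne']

lemma prob_nonneg : 0 ≤ prob r n A := by unfold prob; positivity

lemma prob_mono (h : ∀ M ∈ matchingFamilies r n, A M → B M) : prob r n A ≤ prob r n B := by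
  rw [prob_eq_expect_indicator, prob_eq_expect_indicator]
  refine expect_mono fun M hM => ?_
  by_cases hA : A M
  · rw [if_pos hA, if_pos (h M hM hA)]
  · rw [if_neg hA]
    positivity

lemma prob_eq_zero (h : ∀ M ∈ matchingFamilies r n, ¬A M) : prob r n A = 0 := by
  rw [prob, filter_eq_empty_iff.2 h, card_empty, Nat.cast_zero, zero_div]

lemma prob_exists_mem_le {ι : Type*} (S : Finset ι) (E : ι → Finset (Finset ℕ) → Prop) :
    prob r n (fun M => ∃ i ∈ S, E i M) ≤ ∑ i ∈ S, prob r n (E i) := by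
  simp only [prob_eq_expect_indicator]
  rw [← expect_sum]
  refine expect_mono fun M _ => ?_
  split_ifs with h
  · obtain ⟨i, hi, hE⟩ := h
    calc (1 : ℝ) = if E i M then 1 else 0 := (if_pos hE).symm
      _ ≤ ∑ i ∈ S, if E i M then 1 else 0 :=
        single_le_sum (f := fun i => if E i M then (1 : ℝ) else 0)
          (fun j _ => by positivity) hi
  · positivity

lemma prob_or_le : prob r n (fun M => A M ∨ B M) ≤ prob r n A + prob r n B := by
  simp only [prob_eq_expect_indicator]
  rw [← expect_add]
  refine expect_mono fun M _ => ?_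
  by_cases hA : A M <;> by_cases hB : B M <;> simp [hA, hB]

lemma prob_add_prob_not (hr : 0 < r) : prob r n A + prob r n (fun M => ¬A M) = 1 := by
  rw [prob_eq_expect_indicator, prob_eq_expect_indicator, ← expect_add]
  refine (congrArg (_root_.expect r n) (funext fun M => ?_)).trans (expect_const hr 1)
  by_cases hA : A M <;> simp [hA]

lemma tendsto_prob_and (hr : 0 < r) {A B : ℕ → Finset (Finset ℕ) → Prop}
    (hA : Filter.Tendsto (fun n => prob r n (fun M => ¬A n M)) Filter.atTop (nhds 0))
    (hB : Filter.Tendsto (fun n => prob r n (fun M => ¬B n M)) Filter.atTop (nhds 0)) :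
    Filter.Tendsto (fun n => prob r n (fun M => A n M ∧ B n M)) Filter.atTop (nhds 1) := by
  have hnot : Filter.Tendsto (fun n => prob r n (fun M => ¬(A n M ∧ B n M)))
      Filter.atTop (nhds 0) := by
    refine squeeze_zero (fun n => prob_nonneg) (fun n => ?_) (by simpa using hA.add hB)
    simp only [not_and_or]
    exact prob_or_le
  have h := hnot.const_sub 1
  rw [sub_zero] at h
  exact h.congr fun n => by rw [← prob_add_prob_not hr (A := fun M => A n M ∧ B n M),
    add_sub_cancel_right]

lemma prob_lt_half_expect_le (hr : 0 < r) (hX : 0 < expect r n X) :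
    prob r n (fun M => X M < expect r n X / 2) ≤
      4 * (expect r n (fun M => X M ^ 2) / expect r n X ^ 2 - 1) := by
  set μ := expect r n X with hμ
  have hvariance : expect r n (fun M => (X M - μ) ^ 2) = expect r n (fun M => X M ^ 2) - μ ^ 2 := by
    have hexpand : (fun M => (X M - μ) ^ 2) = fun M => X M ^ 2 + ((-(2 * μ)) * X M + μ ^ 2) := by
      funext M
      ring
    rw [hexpand, expect_add, expect_add, expect_const_mul, expect_const hr, ← hμ]
    ring
  calc prob r n (fun M => X M < μ / 2)
      ≤ expect r n (fun M => 4 / μ ^ 2 * (X M - μ) ^ 2) := by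
        rw [prob_eq_expect_indicator]
        refine expect_mono fun M _ => ?_
        split_ifs with h
        · rw [div_mul_eq_mul_div, le_div_iff₀ (by positivity)]
          nlinarith
        · positivity
    _ = 4 * (expect r n (fun M => X M ^ 2) / μ ^ 2 - 1) := by
        rw [expect_const_mul, hvariance]
        field_simp

end Probability

section UpperTail

variable {r n : ℕ}

lemma pow_mul_factorial_le_pow_mul_descFactorial {s : ℕ} (hs : s ≤ n) :
    n ^ s * s.factorial ≤ s ^ s * n.descFactorial s := by
  have hfactor : ∀ i, n * (s - i) ≤ s * (n - i) := fun i => by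
    rw [Nat.mul_sub, Nat.mul_sub, mul_comm n s]
    exact Nat.sub_le_sub_left (Nat.mul_le_mul_right i hs) _
  calc n ^ s * s.factorial = ∏ i ∈ range s, n * (s - i) := by
        rw [prod_mul_distrib, prod_const, card_range, ← Nat.descFactorial_eq_prod_range,
          Nat.descFactorial_self]
    _ ≤ ∏ i ∈ range s, s * (n - i) := prod_le_prod' fun i _ => hfactor i
    _ = s ^ s * n.descFactorial s := by
        rw [prod_mul_distrib, prod_const, card_range, ← Nat.descFactorial_eq_prod_range]

lemma pow_self_le_exp_mul_factorial (s : ℕ) : (s : ℝ) ^ s ≤ Real.exp 1 ^ s * s.factorial := by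
  have h := Real.pow_div_factorial_le_exp (s : ℝ) s.cast_nonneg s
  rwa [div_le_iff₀ (by positivity), ← Real.exp_one_pow] at h

lemma pow_le_exp_mul_descFactorial {s : ℕ} (hs : s ≤ n) :
    (n : ℝ) ^ s ≤ Real.exp 1 ^ s * n.descFactorial s := by
  have hnat : (n : ℝ) ^ s * s.factorial ≤ (s : ℝ) ^ s * n.descFactorial s := by
    exact_mod_cast pow_mul_factorial_le_pow_mul_descFactorial hs
  refine le_of_mul_le_mul_right (hnat.trans ?_) (by positivity : (0 : ℝ) < s.factorial)
  calc (s : ℝ) ^ s * n.descFactorial s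
      ≤ (Real.exp 1 ^ s * s.factorial) * n.descFactorial s := by
        gcongr
        exact pow_self_le_exp_mul_factorial s
    _ = Real.exp 1 ^ s * n.descFactorial s * s.factorial := by ring

lemma pow_le_choose_mul_add {k : ℕ} : (n + 1) ^ k ≤ ((n + 1) * k + n).choose k := by
  rcases k.eq_zero_or_pos with rfl | hk
  · simp
  have hle : k ≤ (n + 1) * k + n := by nlinarith
  have h := pow_mul_factorial_le_pow_mul_descFactorial hle
  rw [Nat.descFactorial_eq_factorial_mul_choose] at h
  refine Nat.le_of_mul_le_mul_left ?_ (by positivity : 0 < k ^ k * k.factorial)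
  calc k ^ k * k.factorial * (n + 1) ^ k = ((n + 1) * k) ^ k * k.factorial := by
        rw [mul_pow]; ring
    _ ≤ ((n + 1) * k + n) ^ k * k.factorial := by gcongr; omega
    _ ≤ k ^ k * k.factorial * ((n + 1) * k + n).choose k := by rw [mul_assoc]; exact h

lemma uniformBell_mul_pow_le (hr : 0 < r) (n : ℕ) :
    Nat.uniformBell n r * (n + 1) ^ (r - 1) ≤ Nat.uniformBell (n + 1) r := by
  have hsize : n * r + r - 1 = (n + 1) * (r - 1) + n := by
    obtain ⟨k, rfl⟩ : ∃ k, r = k + 1 := ⟨r - 1, by omega⟩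
    simp only [Nat.add_sub_cancel]
    ring_nf
    omega
  rw [Nat.uniformBell_succ_left, mul_comm, hsize]
  exact Nat.mul_le_mul_right _ pow_le_choose_mul_add

lemma uniformBell_sub_mul_descFactorial_pow_le (hr : 0 < r) {s : ℕ} (hs : s ≤ n) :
    Nat.uniformBell (n - s) r * n.descFactorial s ^ (r - 1) ≤ Nat.uniformBell n r := by
  induction s with
  | zero => simp
  | succ s ih =>
    have hstep := uniformBell_mul_pow_le hr (n - (s + 1))
    rw [show n - (s + 1) + 1 = n - s by omega] at hstep
    rw [Nat.descFactorial_succ, mul_pow, ← mul_assoc]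
    exact (Nat.mul_le_mul_right _ hstep).trans (ih (by omega))

lemma uniformBell_sub_div_le (hr : 0 < r) (hn : 0 < n) {s : ℕ} (hs : s ≤ n) :
    (Nat.uniformBell (n - s) r : ℝ) / Nat.uniformBell n r ≤ ((Real.exp 1 / n) ^ (r - 1)) ^ s := by
  have hdesc : (Nat.uniformBell (n - s) r : ℝ) * (n.descFactorial s : ℝ) ^ (r - 1) ≤
      Nat.uniformBell n r := by
    exact_mod_cast uniformBell_sub_mul_descFactorial_pow_le hr hs
  have hbell : (0 : ℝ) < Nat.uniformBell n r := by exact_mod_cast uniformBell_pos hr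
  have : (0 : ℝ) < n := by exact_mod_cast hn
  rw [pow_right_comm, div_pow, div_pow, div_le_div_iff₀ hbell (by positivity)]
  calc (Nat.uniformBell (n - s) r : ℝ) * ((n : ℝ) ^ s) ^ (r - 1)
      ≤ Nat.uniformBell (n - s) r * (Real.exp 1 ^ s * n.descFactorial s) ^ (r - 1) := by
        gcongr
        exact pow_le_exp_mul_descFactorial hs
    _ = (Real.exp 1 ^ s) ^ (r - 1) *
          (Nat.uniformBell (n - s) r * (n.descFactorial s : ℝ) ^ (r - 1)) := by
        rw [mul_pow]; ring
    _ ≤ (Real.exp 1 ^ s) ^ (r - 1) * Nat.uniformBell n r := by gcongr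

lemma prob_superset_le (hr : 0 < r) (hn : 0 < n) (G : Finset (Finset ℕ)) :
    prob r n (G ⊆ ·) ≤ ((Real.exp 1 / n) ^ (r - 1)) ^ #G := by
  by_cases h : ∃ M ∈ matchingFamilies r n, G ⊆ M
  · obtain ⟨M, hM, hGM⟩ := h
    have hcard : #G ≤ n := (mem_matchingFamilies.1 hM).1 ▸ card_le_card hGM
    rw [matchingFamilies_eq_matchingsOn hr] at hM
    rw [prob_superset hr (mem_matchingsOn_biUnion_of_subset hM hGM)
      (biUnion_subset.2 fun e he => subset_of_mem_matchingsOn hM (hGM he))]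
    exact uniformBell_sub_div_le hr hn hcard
  · push Not at h
    rw [prob_eq_zero h]
    positivity

lemma prob_le_card_inter_le_choose_mul_pow (hr : 0 < r) (hn : 0 < n) (W : Finset (Finset ℕ))
    (x : ℕ) :
    prob r n (fun M => x ≤ #(M ∩ W)) ≤ (#W).choose x * ((Real.exp 1 / n) ^ (r - 1)) ^ x :=
  calc prob r n (fun M => x ≤ #(M ∩ W))
      ≤ prob r n (fun M => ∃ G ∈ powersetCard x W, G ⊆ M) := by
        refine prob_mono fun M _ hx => ?_
        obtain ⟨G, hG, hGx⟩ := exists_subset_card_eq hx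
        exact ⟨G, mem_powersetCard.2 ⟨hG.trans inter_subset_right, hGx⟩, hG.trans inter_subset_left⟩
    _ ≤ ∑ G ∈ powersetCard x W, prob r n (G ⊆ ·) := prob_exists_mem_le _ _
    _ ≤ ∑ _G ∈ powersetCard x W, ((Real.exp 1 / n) ^ (r - 1)) ^ x :=
        sum_le_sum fun G hG => (mem_powersetCard.1 hG).2 ▸ prob_superset_le hr hn G
    _ = (#W).choose x * ((Real.exp 1 / n) ^ (r - 1)) ^ x := by
        rw [sum_const, card_powersetCard, nsmul_eq_mul]

lemma choose_mul_pow_le (N x : ℕ) {q : ℝ} (hq : 0 ≤ q) :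
    N.choose x * q ^ x ≤ (Real.exp 1 * N * q / x) ^ x := by
  rcases x.eq_zero_or_pos with rfl | hx
  · simp
  have hchoose : (N.choose x : ℝ) ≤ (Real.exp 1 * N / x) ^ x := by
    refine (Nat.choose_le_pow_div (α := ℝ) x N).trans ?_
    rw [div_pow, mul_pow, div_le_div_iff₀ (by positivity) (by positivity)]
    calc (N : ℝ) ^ x * (x : ℝ) ^ x ≤ (N : ℝ) ^ x * (Real.exp 1 ^ x * x.factorial) := by
          gcongr
          exact pow_self_le_exp_mul_factorial x
      _ = Real.exp 1 ^ x * (N : ℝ) ^ x * x.factorial := by ring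
  calc N.choose x * q ^ x ≤ (Real.exp 1 * N / x) ^ x * q ^ x := by gcongr
    _ = (Real.exp 1 * N * q / x) ^ x := by rw [← mul_pow, div_mul_eq_mul_div]

lemma prob_le_card_inter_le_exp (hr : 0 < r) (hn : 0 < n) {W : Finset (Finset ℕ)} {y T : ℝ}
    (hy : 0 < y) (hT : 0 ≤ T)
    (hW : Real.exp (T + 1) * (#W * (Real.exp 1 / n) ^ (r - 1)) ≤ y) :
    prob r n (fun M => y ≤ #(M ∩ W)) ≤ Real.exp (-(T * y)) := by
  have hx : 0 < ⌈y⌉₊ := Nat.ceil_pos.2 hy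
  have hbase : Real.exp 1 * #W * (Real.exp 1 / n) ^ (r - 1) / ⌈y⌉₊ ≤ Real.exp (-T) := by
    rw [div_le_iff₀ (by positivity), Real.exp_neg, inv_mul_eq_div, le_div_iff₀ (Real.exp_pos T)]
    rw [Real.exp_add] at hW
    exact le_trans (by linarith) (Nat.le_ceil y)
  calc prob r n (fun M => y ≤ #(M ∩ W)) = prob r n (fun M => ⌈y⌉₊ ≤ #(M ∩ W)) := by
        simp only [Nat.ceil_le]
    _ ≤ (#W).choose ⌈y⌉₊ * ((Real.exp 1 / n) ^ (r - 1)) ^ ⌈y⌉₊ :=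
        prob_le_card_inter_le_choose_mul_pow hr hn W _
    _ ≤ (Real.exp 1 * #W * (Real.exp 1 / n) ^ (r - 1) / ⌈y⌉₊) ^ ⌈y⌉₊ :=
        choose_mul_pow_le _ _ (by positivity)
    _ ≤ Real.exp (-T) ^ ⌈y⌉₊ := by gcongr
    _ = Real.exp (-(T * ⌈y⌉₊)) := by rw [← Real.exp_nat_mul]; ring_nf
    _ ≤ Real.exp (-(T * y)) := by
        gcongr
        exact Nat.le_ceil y

lemma prob_exists_le_card_inter_le {ι : Type*} [Finite ι] (hr : 0 < r) (hn : 0 < n)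
    (W : ι → Finset (Finset ℕ)) {y T : ℝ} (hy : 0 < y) (hT : 0 ≤ T)
    (hW : ∀ i, Real.exp (T + 1) * (#(W i) * (Real.exp 1 / n) ^ (r - 1)) ≤ y) :
    prob r n (fun M => ∃ i, y ≤ #(M ∩ W i)) ≤ Nat.card ι * Real.exp (-(T * y)) := by
  have := Fintype.ofFinite ι
  calc prob r n (fun M => ∃ i, y ≤ #(M ∩ W i))
      = prob r n (fun M => ∃ i ∈ (univ : Finset ι), y ≤ #(M ∩ W i)) := by
        simp only [mem_univ, true_and]
    _ ≤ ∑ i, prob r n (fun M => y ≤ #(M ∩ W i)) := prob_exists_mem_le _ _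
    _ ≤ ∑ _i : ι, Real.exp (-(T * y)) :=
        sum_le_sum fun i _ => prob_le_card_inter_le_exp hr hn hy hT (hW i)
    _ = Nat.card ι * Real.exp (-(T * y)) := by
        rw [sum_const, nsmul_eq_mul, card_univ, Nat.card_eq_fintype_card]

end UpperTail

section SecondMoment

variable {r n : ℕ} {U : Finset (Finset ℕ)}

/-- The probability that a fixed `r`-subset of `[rn]` is an edge of a random ordered
`r`-matching of size `n`. -/
noncomputable def edgeProb (r n : ℕ) : ℝ := ((r * n - 1).choose (r - 1) : ℝ)⁻¹

lemma edgeProb_pos (hn : 0 < n) : 0 < edgeProb r n := by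
  have : r - 1 ≤ r * n - 1 := Nat.sub_le_sub_right (Nat.le_mul_of_pos_right r hn) 1
  exact inv_pos.2 (Nat.cast_pos.2 (Nat.choose_pos this))

lemma inv_pow_le_edgeProb (hn : 0 < n) :
    ((r * n : ℝ) ^ (r - 1))⁻¹ ≤ edgeProb r n := by
  refine inv_anti₀ (inv_pos.1 (edgeProb_pos hn)) ?_
  calc ((r * n - 1).choose (r - 1) : ℝ) ≤ ((r * n - 1 : ℕ) : ℝ) ^ (r - 1) :=
        mod_cast Nat.choose_le_pow _ _
    _ ≤ (r * n : ℝ) ^ (r - 1) := by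
        gcongr
        exact_mod_cast Nat.sub_le _ _

lemma uniformBell_div_uniformBell_succ (hr : 0 < r) :
    (Nat.uniformBell n r : ℝ) / Nat.uniformBell (n + 1) r = edgeProb r (n + 1) := by
  have hbell : (Nat.uniformBell n r : ℝ) ≠ 0 := by exact_mod_cast (uniformBell_pos hr).ne'
  rw [Nat.uniformBell_succ_left, Nat.cast_mul, edgeProb, show n * r + r = r * (n + 1) by ring,
    div_mul_cancel_right₀ hbell]

lemma prob_mem (hr : 0 < r) (hn : 0 < n) {e : Finset ℕ} (he : e ∈ powersetCard r (Icc 1 (r * n))) :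
    prob r n (e ∈ ·) = edgeProb r n := by
  obtain ⟨he, hcard⟩ := mem_powersetCard.1 he
  obtain ⟨k, rfl⟩ : ∃ k, n = k + 1 := ⟨n - 1, by omega⟩
  have h := prob_superset hr (singleton_mem_matchingsOn hcard) he
  simp only [singleton_subset_iff, card_singleton, Nat.add_sub_cancel] at h
  rw [h, uniformBell_div_uniformBell_succ hr]

lemma edgeProb_pred_le (hn : 3 ≤ n) :
    edgeProb r (n - 1) ≤ ((n : ℝ) / (n - 2)) ^ (r - 1) * edgeProb r n := by
  obtain ⟨m, rfl⟩ : ∃ m, n = m + 3 := ⟨n - 3, by omega⟩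
  have hdesc : (m + 1) ^ (r - 1) * (r * (m + 3) - 1).descFactorial (r - 1) ≤
      (m + 3) ^ (r - 1) * (r * (m + 2) - 1).descFactorial (r - 1) := by
    simp only [Nat.descFactorial_eq_prod_range]
    rw [← card_range (r - 1), ← prod_const, ← prod_const, card_range, ← prod_mul_distrib,
      ← prod_mul_distrib]
    refine prod_le_prod' fun i hi => ?_
    have hi : i + 1 < r := by have := mem_range.1 hi; omega
    have h3 : i + 1 ≤ r * (m + 3) := hi.le.trans (Nat.le_mul_of_pos_right r (by omega))
    have h2 : i + 1 ≤ r * (m + 2) := hi.le.trans (Nat.le_mul_of_pos_right r (by omega))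
    rw [Nat.sub_sub, Nat.sub_sub, add_comm 1 i]
    zify [h2, h3]
    nlinarith
  rw [Nat.descFactorial_eq_factorial_mul_choose, Nat.descFactorial_eq_factorial_mul_choose,
    mul_left_comm, mul_left_comm (_ ^ _), Nat.mul_le_mul_left_iff (Nat.factorial_pos _)] at hdesc
  have hprob := edgeProb_pos (r := r) (n := m + 2) (by omega)
  have hprob' := edgeProb_pos (r := r) (n := m + 3) (by omega)
  have hcast : ((m + 3 : ℕ) : ℝ) - 2 = m + 1 := by push_cast; ring
  rw [hcast, show m + 3 - 1 = m + 2 by omega, div_pow, edgeProb, edgeProb, ← div_eq_mul_inv,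
    div_div, inv_eq_one_div, div_le_div_iff₀ (inv_pos.1 hprob)
      (mul_pos (by positivity) (inv_pos.1 hprob')), one_mul]
  exact_mod_cast hdesc

lemma prob_mem_and_mem_le (hr : 0 < r) (hn : 3 ≤ n) {e f : Finset ℕ}
    (he : e ∈ powersetCard r (Icc 1 (r * n))) (hf : f ∈ powersetCard r (Icc 1 (r * n)))
    (hef : e ≠ f) :
    prob r n (fun M => e ∈ M ∧ f ∈ M) ≤ ((n : ℝ) / (n - 2)) ^ (r - 1) * edgeProb r n ^ 2 := by
  have hn2 : (0 : ℝ) ≤ n - 2 := by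
    have : (3 : ℝ) ≤ n := by exact_mod_cast hn
    linarith
  obtain ⟨heV, hecard⟩ := mem_powersetCard.1 he
  obtain ⟨hfV, hfcard⟩ := mem_powersetCard.1 hf
  by_cases hdisj : Disjoint e f
  · obtain ⟨m, rfl⟩ : ∃ m, n = m + 2 := ⟨n - 2, by omega⟩
    have h := prob_superset hr (union_mem_matchingsOn (singleton_mem_matchingsOn hecard)
      (singleton_mem_matchingsOn hfcard) hdisj) (union_subset heV hfV)
    rw [singleton_union, card_pair hef, Nat.add_sub_cancel] at h
    simp only [insert_subset_iff, singleton_subset_iff] at h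
    have hbell : (Nat.uniformBell (m + 1) r : ℝ) ≠ 0 := by exact_mod_cast (uniformBell_pos hr).ne'
    rw [h, ← div_mul_div_cancel₀ hbell, uniformBell_div_uniformBell_succ hr,
      uniformBell_div_uniformBell_succ hr, sq, ← mul_assoc]
    exact mul_le_mul_of_nonneg_right (edgeProb_pred_le hn) (edgeProb_pos (by omega)).le
  · rw [prob_eq_zero]
    · positivity
    · rintro M hM ⟨heM, hfM⟩
      exact hdisj ((mem_matchingFamilies.1 hM).2.2.1 e heM f hfM hef)

lemma card_inter_eq_sum_indicator (M U : Finset (Finset ℕ)) :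
    (#(M ∩ U) : ℝ) = ∑ e ∈ U, if e ∈ M then 1 else 0 := by
  rw [sum_boole, filter_mem_eq_inter, inter_comm]

lemma expect_card_inter (hr : 0 < r) (hn : 0 < n) (hU : U ⊆ powersetCard r (Icc 1 (r * n))) :
    expect r n (fun M => #(M ∩ U)) = #U * edgeProb r n := by
  simp only [card_inter_eq_sum_indicator]
  rw [expect_sum, ← nsmul_eq_mul]
  refine sum_eq_card_nsmul fun e he => ?_
  rw [← prob_mem hr hn (hU he), prob_eq_expect_indicator]

lemma expect_sq_card_inter_le (hr : 0 < r) (hn : 3 ≤ n)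
    (hU : U ⊆ powersetCard r (Icc 1 (r * n))) :
    expect r n (fun M => (#(M ∩ U) : ℝ) ^ 2) ≤
      #U * edgeProb r n + ((n : ℝ) / (n - 2)) ^ (r - 1) * (#U * edgeProb r n) ^ 2 := by
  set p := edgeProb r n
  set ρ := ((n : ℝ) / (n - 2)) ^ (r - 1)
  have hsq : (fun M => (#(M ∩ U) : ℝ) ^ 2) =
      fun M => ∑ e ∈ U, ∑ f ∈ U, if e ∈ M ∧ f ∈ M then 1 else 0 := by
    funext M
    simp only [card_inter_eq_sum_indicator, sq, sum_mul_sum, ite_zero_mul_ite_zero, mul_one]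
  have hρp : 0 ≤ ρ * p ^ 2 := by
    have : (3 : ℝ) ≤ n := by exact_mod_cast hn
    have : (0 : ℝ) ≤ n - 2 := by linarith
    positivity
  have hpair : ∀ e ∈ U, ∀ f ∈ U,
      prob r n (fun M => e ∈ M ∧ f ∈ M) ≤ (if e = f then p else 0) + ρ * p ^ 2 := by
    intro e he f hf
    split_ifs with hef
    · subst hef
      simp only [and_self]
      rw [prob_mem hr (by omega) (hU he)]
      exact le_add_of_nonneg_right hρp
    · rw [zero_add]
      exact prob_mem_and_mem_le hr hn (hU he) (hU hf) hef
  calc expect r n (fun M => (#(M ∩ U) : ℝ) ^ 2)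
      = ∑ e ∈ U, ∑ f ∈ U, prob r n (fun M => e ∈ M ∧ f ∈ M) := by
        simp only [hsq, expect_sum, prob_eq_expect_indicator]
    _ ≤ ∑ e ∈ U, ∑ f ∈ U, ((if e = f then p else 0) + ρ * p ^ 2) :=
        sum_le_sum fun e he => sum_le_sum fun f hf => hpair e he f hf
    _ = #U * p + ρ * (#U * p) ^ 2 := by
        simp only [sum_add_distrib, sum_ite_eq, sum_ite_mem, inter_self, sum_const, nsmul_eq_mul]
        ring

lemma prob_card_inter_lt_half_le (hr : 0 < r) (hn : 3 ≤ n)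
    (hU : U ⊆ powersetCard r (Icc 1 (r * n))) (hU₀ : U.Nonempty) :
    prob r n (fun M => (#(M ∩ U) : ℝ) < #U * edgeProb r n / 2) ≤
      4 * (1 / (#U * edgeProb r n) + (((n : ℝ) / (n - 2)) ^ (r - 1) - 1)) := by
  have hmean := expect_card_inter hr (by omega) hU
  have hpos : 0 < #U * edgeProb r n :=
    mul_pos (Nat.cast_pos.2 hU₀.card_pos) (edgeProb_pos (by omega))
  have hcheb := prob_lt_half_expect_le hr (hmean.symm ▸ hpos)
  rw [hmean] at hcheb
  refine hcheb.trans (mul_le_mul_of_nonneg_left ?_ (by norm_num))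
  rw [← add_sub_assoc, sub_le_sub_iff_right, div_le_iff₀ (by positivity)]
  refine (expect_sq_card_inter_le hr hn hU).trans_eq ?_
  rw [add_mul]
  congr 1
  field_simp

end SecondMoment

section LowerSets

lemma mem_iff_val_lt_card_of_isLowerSet {b : ℕ} {S : Finset (Fin b)}
    (hS : IsLowerSet (S : Set (Fin b))) (x : Fin b) : x ∈ S ↔ (x : ℕ) < #S := by
  constructor
  · intro hx
    have hsub : Iic x ⊆ S := fun y hy => hS (mem_Iic.1 hy) hx
    rw [← Nat.succ_le_iff, Nat.succ_eq_add_one, ← Fin.card_Iic]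
    exact card_le_card hsub
  · contrapose!
    intro hx
    have hsub : S ⊆ Iio x := fun y hy => mem_Iio.2 (lt_of_not_ge fun hxy => hx (hS hxy hy))
    rw [← Fin.card_Iio]
    exact card_le_card hsub

lemma card_lowerSet_prod_le {α β : Type*} [Preorder α] [Preorder β] [Finite α] [Finite β] :
    Nat.card (LowerSet (α × β)) ≤ Nat.card (LowerSet β) ^ Nat.card α := by
  have : Finite (LowerSet β) := Finite.of_injective _ SetLike.coe_injective
  let slice (D : LowerSet (α × β)) (a : α) : LowerSet β :=
    ⟨{b | (a, b) ∈ D}, fun _ _ hcb hb => D.lower (Prod.mk_le_mk.2 ⟨le_rfl, hcb⟩) hb⟩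
  have hslice : Function.Injective slice := fun D E hDE => by
    ext ⟨a, b⟩
    exact SetLike.ext_iff.1 (congrFun hDE a) b
  exact (Nat.card_le_card_of_injective slice hslice).trans_eq Nat.card_fun

lemma card_lowerSet_fin_prod_fin_le (a b : ℕ) :
    Nat.card (LowerSet (Fin a × Fin b)) ≤ 2 ^ (a + b) := by
  let height (D : LowerSet (Fin a × Fin b)) (i : Fin a) : ℕ := #{x | (i, x) ∈ D}
  have height_le D i : height D i ≤ b := (card_le_univ _).trans_eq (Fintype.card_fin b)
  have height_anti D : Antitone (height D) := fun i j hij => card_le_card fun x hx => by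
    rw [mem_filter_univ] at hx ⊢
    exact D.lower (Prod.mk_le_mk.2 ⟨hij, le_rfl⟩) hx
  have mem_iff (D : LowerSet (Fin a × Fin b)) i x : (i, x) ∈ D ↔ (x : ℕ) < height D i := by
    rw [← mem_iff_val_lt_card_of_isLowerSet, mem_filter_univ]
    intro y z hzy hy
    rw [coe_filter_univ, Set.mem_ofPred_eq] at hy ⊢
    exact D.lower (Prod.mk_le_mk.2 ⟨le_rfl, hzy⟩) hy
  -- The boundary of a lower set is a lattice path, determined by the positions of its `a`
  -- horizontal steps among its `a + b` steps.
  let step (D : LowerSet (Fin a × Fin b)) (i : Fin a) : Fin (a + b) :=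
    ⟨i + (b - height D i), by omega⟩
  have step_strictMono D : StrictMono (step D) := fun i j hij => by
    have := height_anti D hij.le
    simp only [step, Fin.mk_lt_mk]
    omega
  have hinj : Function.Injective fun D => univ.image (step D) := fun D E hDE => by
    have hrange : Set.range (step D) = Set.range (step E) := by
      simpa only [coe_image, coe_univ, Set.image_univ] using congrArg SetLike.coe hDE
    have hstep := ((step_strictMono D).range_inj (step_strictMono E)).1 hrange
    ext ⟨i, x⟩
    have hi : (i : ℕ) + (b - height D i) = i + (b - height E i) :=
      congrArg Fin.val (congrFun hstep i)
    have := height_le D i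
    have := height_le E i
    rw [SetLike.mem_coe, SetLike.mem_coe, mem_iff, mem_iff]
    omega
  refine (Nat.card_le_card_of_injective _ hinj).trans_eq ?_
  rw [Nat.card_eq_fintype_card, Fintype.card_finset, Fintype.card_fin]

lemma card_lowerSet_fin_arrow_fin_le {r : ℕ} (hr : 2 ≤ r) (m : ℕ) :
    Nat.card (LowerSet (Fin r → Fin m)) ≤ 4 ^ m ^ (r - 1) := by
  induction r, hr using Nat.le_induction with
  | base =>
    rw [Nat.card_congr (LowerSet.map (OrderIso.finTwoArrowIso (Fin m))).toEquiv]
    refine (card_lowerSet_fin_prod_fin_le m m).trans_eq ?_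
    rw [← two_mul, pow_mul, Nat.add_one_sub_one, pow_one, Nat.pow_two]
  | succ r hr ih =>
    rw [← Nat.card_congr (LowerSet.map (Fin.consOrderIso fun _ : Fin (r + 1) => Fin m)).toEquiv]
    calc Nat.card (LowerSet (Fin m × (Fin r → Fin m)))
        ≤ Nat.card (LowerSet (Fin r → Fin m)) ^ Nat.card (Fin m) := card_lowerSet_prod_le
      _ ≤ (4 ^ m ^ (r - 1)) ^ m := by
        rw [Nat.card_fin]
        exact Nat.pow_le_pow_left ih m
      _ = 4 ^ m ^ (r + 1 - 1) := by
        rw [← pow_mul, ← pow_succ, Nat.sub_add_cancel (by omega), Nat.add_sub_cancel]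

end LowerSets

section StrongAntichains

variable {r m : ℕ}

lemma card_filter_apply_eq_zero_le [NeZero m] (i : Fin r) :
    #{c : Fin r → Fin m | c i = 0} ≤ m ^ (r - 1) := by
  obtain ⟨k, rfl⟩ : ∃ k, r = k + 1 := ⟨r - 1, by have := i.2; omega⟩
  calc #{c : Fin (k + 1) → Fin m | c i = 0} ≤ #(univ : Finset (Fin k → Fin m)) := by
        refine card_le_card_of_injOn i.removeNth (fun _ _ => mem_univ _) fun c hc d hd hcd => ?_
        have hc := (mem_filter.1 hc).2
        have hd := (mem_filter.1 hd).2
        rw [← i.insertNth_self_removeNth c, ← i.insertNth_self_removeNth d, hc, hd, hcd]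
    _ = m ^ (k + 1 - 1) := by simp

lemma injOn_sub_of_isAntichain_strongLT {ι : Type*} {F : Set (ι → Fin m)}
    (hF : IsAntichain StrongLT F) {low : (ι → Fin m) → Fin m} (low_le : ∀ c i, low c ≤ c i) :
    Set.InjOn (fun c i => c i - low c) F := by
  intro c hc d hd hcd
  wlog hle : low c ≤ low d generalizing c d
  · exact (this hd hc hcd.symm (le_of_not_ge hle)).symm
  have hval i : (c i : ℕ) - low c = d i - low d := by
    rw [← Fin.sub_val_of_le (low_le c i), ← Fin.sub_val_of_le (low_le d i)]
    exact congrArg Fin.val (congrFun hcd i)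
  rcases hle.lt_or_eq with hlt | heq
  · by_contra hne
    refine hF hc hd hne fun i => Fin.lt_def.2 ?_
    have := hval i
    have := low_le c i
    have := low_le d i
    omega
  · funext i
    have := hval i
    have := low_le c i
    have := low_le d i
    omega

lemma card_le_of_isAntichain_strongLT (hr : 0 < r) {F : Finset (Fin r → Fin m)}
    (hF : IsAntichain StrongLT (F : Set (Fin r → Fin m))) : #F ≤ r * m ^ (r - 1) := by
  have : NeZero r := ⟨hr.ne'⟩
  rcases F.eq_empty_or_nonempty with rfl | ⟨c₀, -⟩
  · exact Nat.zero_le _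
  have : NeZero m := ⟨(Fin.pos (c₀ 0)).ne'⟩
  obtain ⟨low, low_le, low_eq⟩ : ∃ low : (Fin r → Fin m) → Fin m,
      (∀ c i, low c ≤ c i) ∧ ∀ c, ∃ i, c i = low c := by
    choose i hi using fun c : Fin r → Fin m => Finite.exists_min c
    exact ⟨fun c => c (i c), hi, fun c => ⟨i c, rfl⟩⟩
  -- Translate each point along the diagonal onto a coordinate hyperplane.
  have hmaps : Set.MapsTo (fun c i => c i - low c) F
      ↑(univ.biUnion fun i : Fin r => {c : Fin r → Fin m | c i = 0} : Finset (Fin r → Fin m)) := by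
    intro c _
    obtain ⟨i, hi⟩ := low_eq c
    refine mem_biUnion.2 ⟨i, mem_univ i, ?_⟩
    rw [mem_filter_univ]
    exact sub_eq_zero.2 hi
  calc #F ≤ #(univ.biUnion fun i : Fin r => {c : Fin r → Fin m | c i = 0}) :=
        card_le_card_of_injOn _ hmaps (injOn_sub_of_isAntichain_strongLT hF low_le)
    _ ≤ ∑ i : Fin r, #{c : Fin r → Fin m | c i = 0} := card_biUnion_le
    _ ≤ ∑ _i : Fin r, m ^ (r - 1) := sum_le_sum fun i _ => card_filter_apply_eq_zero_le i
    _ = r * m ^ (r - 1) := by simp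

end StrongAntichains
section Boxes

variable {r L : ℕ} {q q' : Fin r → ℕ} {e f : Finset ℕ}

/-- The `r`-element sets whose `i`-th vertex lies in the `q i`-th interval of length `L`. -/
def boxEdges (L : ℕ) (q : Fin r → ℕ) : Finset (Finset ℕ) :=
  {x ∈ Fintype.piFinset fun i => Ico (q i * L) ((q i + 1) * L) | StrictMono x}.image
    fun x => univ.image x

lemma mem_boxEdges :
    e ∈ boxEdges L q ↔ e.card = r ∧ ∀ i, vertex r e i ∈ Ico (q i * L) ((q i + 1) * L) := by
  simp only [boxEdges, mem_image, mem_filter, Fintype.mem_piFinset]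
  constructor
  · rintro ⟨x, ⟨hbox, hx⟩, rfl⟩
    rw [vertex_image hx, card_image_of_injective _ hx.injective, card_univ, Fintype.card_fin]
    exact ⟨rfl, hbox⟩
  · rintro ⟨he, hbox⟩
    exact ⟨vertex r e, ⟨hbox, vertex_strictMono he⟩, image_vertex he⟩

lemma vertex_lt_vertex_of_mem_boxEdges (he : e ∈ boxEdges L q) (hf : f ∈ boxEdges L q')
    {i j : Fin r} (h : q i < q' j) : vertex r e i < vertex r f j :=
  calc vertex r e i < (q i + 1) * L := (mem_Ico.1 ((mem_boxEdges.1 he).2 i)).2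
    _ ≤ q' j * L := Nat.mul_le_mul_right L h
    _ ≤ vertex r f j := (mem_Ico.1 ((mem_boxEdges.1 hf).2 j)).1

lemma eq_of_mem_boxEdges (he : e ∈ boxEdges L q) (he' : e ∈ boxEdges L q') : q = q' :=
  funext fun _ => le_antisymm
    (le_of_not_gt fun h => (vertex_lt_vertex_of_mem_boxEdges he' he h).false)
    (le_of_not_gt fun h => (vertex_lt_vertex_of_mem_boxEdges he he' h).false)

lemma card_piFinset_Ico_mul (L : ℕ) (q : Fin r → ℕ) :
    #(Fintype.piFinset fun i => Ico (q i * L) ((q i + 1) * L)) = L ^ r := by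
  simp [Fintype.card_piFinset, add_mul]

lemma card_boxEdges_le (L : ℕ) (q : Fin r → ℕ) : #(boxEdges L q) ≤ L ^ r :=
  card_image_le.trans ((card_filter_le _ _).trans_eq (card_piFinset_Ico_mul L q))

lemma card_boxEdges (L : ℕ) (hq : StrictMono q) : #(boxEdges L q) = L ^ r := by
  rw [boxEdges, card_image_of_injOn, filter_true_of_mem, card_piFinset_Ico_mul]
  · intro x hx i j hij
    rw [Fintype.mem_piFinset] at hx
    calc x i < (q i + 1) * L := (mem_Ico.1 (hx i)).2
      _ ≤ q j * L := Nat.mul_le_mul_right L (hq hij)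
      _ ≤ x j := (mem_Ico.1 (hx j)).1
  · intro x hx y hy hxy
    rw [← vertex_image (mem_filter.1 hx).2, ← vertex_image (mem_filter.1 hy).2]
    exact congrArg (vertex r) hxy

end Boxes

section SignedBoxes

variable {r m L : ℕ} {o : Fin r → ℕ} {s : Fin r → Bool} {c d : Fin r → Fin m}
  {e f : Finset ℕ} {D : Finset (Fin r → Fin m)}

/-- The cell `c` with the coordinates of negative sign reversed. -/
def reflect (s : Fin r → Bool) (c : Fin r → Fin m) : Fin r → Fin m :=
  fun i => if s i then c i else (c i).rev

lemma reflect_reflect (s : Fin r → Bool) (c : Fin r → Fin m) : reflect s (reflect s c) = c := by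
  funext i
  cases h : s i <;> simp [reflect, h]

lemma reflect_injective (s : Fin r → Bool) :
    Function.Injective (reflect s : (Fin r → Fin m) → _) :=
  Function.LeftInverse.injective (reflect_reflect s)

/-- The edges whose `i`-th vertex lies in a prescribed interval of length `L`, chosen by `c i` among
the `m` consecutive ones starting at the `o i`-th. The choice is reversed where `s i` is false, so
that the order of cells corresponds to the relation of sign `s` between edges. -/
def signedBox (L : ℕ) (o : Fin r → ℕ) (s : Fin r → Bool) (c : Fin r → Fin m) :
    Finset (Finset ℕ) :=
  boxEdges L fun i => o i + reflect s c i

/-- The edges lying in the signed boxes of the cells in `D`. -/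
def signedRegion (L : ℕ) (o : Fin r → ℕ) (s : Fin r → Bool) (D : Finset (Fin r → Fin m)) :
    Finset (Finset ℕ) :=
  D.biUnion (signedBox L o s)

lemma card_eq_of_mem_signedBox (he : e ∈ signedBox L o s c) : e.card = r := (mem_boxEdges.1 he).1

lemma relSign_eq_of_strongLT (he : e ∈ signedBox L o s c) (hf : f ∈ signedBox L o s d)
    (hcd : StrongLT c d) : relSign r e f = s := by
  funext i
  have hlt := hcd i
  cases h : s i
  · refine decide_eq_false (vertex_lt_vertex_of_mem_boxEdges hf he ?_).not_gt
    simpa only [reflect, h, add_lt_add_iff_left, Fin.val_fin_lt, Fin.rev_lt_rev, if_true,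
      Bool.false_eq_true, if_false] using hlt
  · refine decide_eq_true (vertex_lt_vertex_of_mem_boxEdges he hf ?_)
    simpa only [reflect, h, add_lt_add_iff_left, Fin.val_fin_lt, Fin.rev_lt_rev, if_true,
      Bool.false_eq_true, if_false] using hlt

lemma le_of_relSign_eq (he : e ∈ signedBox L o s c) (hf : f ∈ signedBox L o s d)
    (hs : relSign r e f = s) : c ≤ d := by
  intro i
  have hi := congrFun hs i
  by_contra! hlt
  cases h : s i
  · rw [h] at hi
    refine of_decide_eq_false hi (vertex_lt_vertex_of_mem_boxEdges he hf ?_)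
    simpa only [reflect, h, add_lt_add_iff_left, Fin.val_fin_lt, Fin.rev_lt_rev, if_true,
      Bool.false_eq_true, if_false] using hlt
  · rw [h] at hi
    refine (of_decide_eq_true hi).not_gt (vertex_lt_vertex_of_mem_boxEdges hf he ?_)
    simpa only [reflect, h, add_lt_add_iff_left, Fin.val_fin_lt, Fin.rev_lt_rev, if_true,
      Bool.false_eq_true, if_false] using hlt

lemma eq_of_mem_signedBox (he : e ∈ signedBox L o s c) (he' : e ∈ signedBox L o s d) : c = d := by
  refine reflect_injective s (funext fun i => Fin.ext ?_)
  exact Nat.add_left_cancel (congrFun (eq_of_mem_boxEdges he he') i)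

lemma vertex_lt_vertex_of_mem_signedBox (ho : ∀ i j, i < j → o i + m ≤ o j)
    (he : e ∈ signedBox L o s c) (hf : f ∈ signedBox L o s d) {i j : Fin r} (hij : i < j) :
    vertex r e i < vertex r f j := by
  refine vertex_lt_vertex_of_mem_boxEdges he hf ?_
  have := ho i j hij
  omega

lemma card_signedRegion_le (L : ℕ) (o : Fin r → ℕ) (s : Fin r → Bool)
    (D : Finset (Fin r → Fin m)) : #(signedRegion L o s D) ≤ #D * L ^ r :=
  card_biUnion_le_card_mul _ _ _ fun _ _ => card_boxEdges_le L _

lemma card_signedRegion (L : ℕ) (ho : ∀ i j, i < j → o i + m ≤ o j) (s : Fin r → Bool)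
    (D : Finset (Fin r → Fin m)) : #(signedRegion L o s D) = #D * L ^ r := by
  rw [signedRegion, card_biUnion]
  · refine sum_const_nat fun c _ => card_boxEdges L fun i j hij => ?_
    have := ho i j hij
    omega
  · exact fun c _ d _ hcd => disjoint_left.2 fun e he he' => hcd (eq_of_mem_signedBox he he')

lemma exists_mem_signedBox (he : e.card = r) (hL : ∀ v ∈ e, v < m * L) (s : Fin r → Bool) :
    ∃ c : Fin r → Fin m, e ∈ signedBox L 0 s c := by
  have hdiv i : vertex r e i / L < m := Nat.div_lt_of_lt_mul (mul_comm m L ▸ hL _ (vertex_mem he i))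
  refine ⟨reflect s fun i => ⟨vertex r e i / L, hdiv i⟩, mem_boxEdges.2 ⟨he, fun i => ?_⟩⟩
  have hLpos : 0 < L := pos_of_mul_pos_right ((Nat.zero_le _).trans_lt (hL _ (vertex_mem he i)))
    (Nat.zero_le m)
  rw [reflect_reflect, Pi.zero_apply, zero_add, mem_Ico]
  exact ⟨Nat.div_mul_le_self _ _, Nat.lt_mul_of_div_lt (Nat.lt_succ_self _) hLpos⟩

lemma signedRegion_subset_powersetCard {N : ℕ} (ho : ∀ i, 0 < o i) (hN : ∀ i, (o i + m) * L ≤ N)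
    (s : Fin r → Bool) (D : Finset (Fin r → Fin m)) :
    signedRegion L o s D ⊆ powersetCard r (Icc 1 N) := by
  intro e he
  obtain ⟨c, -, hec⟩ := mem_biUnion.1 he
  obtain ⟨hcard, hbox⟩ := mem_boxEdges.1 hec
  refine mem_powersetCard.2 ⟨?_, hcard⟩
  rw [← image_vertex hcard, image_subset_iff]
  intro i _
  obtain ⟨hlow, hhigh⟩ := mem_Ico.1 (hbox i)
  have hL : 0 < L := by
    by_contra! h
    simp [Nat.le_zero.1 h] at hhigh
  refine mem_Icc.2 ⟨?_, hhigh.le.trans (le_trans ?_ (hN i))⟩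
  · exact (Nat.mul_pos (Nat.add_pos_left (ho i) _) hL).trans_le hlow
  · exact Nat.mul_le_mul_right L (by have := (reflect s c i).2; omega)

end SignedBoxes

section CliquesAndCells

variable {r m L : ℕ} {o : Fin r → ℕ} {s : Fin r → Bool} {Ps : Set (Finset (Finset ℕ))}
  {M K : Finset (Finset ℕ)}

/-- The cells of `D` that are not exceeded by another cell of `D` in all coordinates. -/
noncomputable def peaks (D : LowerSet (Fin r → Fin m)) : Finset (Fin r → Fin m) :=
  {c | c ∈ D ∧ ∀ d ∈ D, ¬StrongLT c d}

lemma mem_peaks {D : LowerSet (Fin r → Fin m)} {c : Fin r → Fin m} :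
    c ∈ peaks D ↔ c ∈ D ∧ ∀ d ∈ D, ¬StrongLT c d := mem_filter_univ c

lemma card_peaks_le (hr : 0 < r) (D : LowerSet (Fin r → Fin m)) :
    #(peaks D) ≤ r * m ^ (r - 1) :=
  card_le_of_isAntichain_strongLT hr fun _ hc d hd _ =>
    (mem_peaks.1 hc).2 d (mem_peaks.1 hd).1

lemma IsClique.exists_subset_signedRegion_peaks (hr : 0 < r)
    (hPs : ∀ P ∈ Ps, IsPartitePattern r P) (hs : signPattern s ∉ Ps) (hK : IsClique r Ps K)
    (hL : ∀ e ∈ K, ∀ v ∈ e, v < m * L) :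
    ∃ D : LowerSet (Fin r → Fin m), K ⊆ signedRegion L 0 s (peaks D) := by
  refine ⟨lowerClosure {c | ∃ e ∈ K, e ∈ signedBox L 0 s c}, fun e he => ?_⟩
  obtain ⟨c, hec⟩ := exists_mem_signedBox (hK.1 e he) (hL e he) s
  refine mem_biUnion.2 ⟨c, mem_peaks.2 ⟨subset_lowerClosure ⟨e, he, hec⟩, ?_⟩, hec⟩
  rintro d hd hcd
  obtain ⟨d', ⟨f, hf, hfd'⟩, hdd'⟩ := mem_lowerClosure.1 hd
  have hcd' : StrongLT c d' := hcd.trans_le hdd'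
  have hsign : relSign r e f = s := relSign_eq_of_strongLT hec hfd' hcd'
  have hef : e ≠ f := by
    rintro rfl
    exact (hcd' ⟨0, hr⟩).ne (congrFun (eq_of_mem_signedBox hec hfd') _)
  obtain ⟨P, hP, hform⟩ := hK.2.2 e he f hf hef
  obtain ⟨t, rfl⟩ := (hPs P hP).exists_eq_signPattern
  rw [hform.signPattern_eq (hK.1 e he) (hK.1 f hf), hsign] at hP
  exact hs hP

lemma exists_formsPattern_of_incompRel (ho : ∀ i j, i < j → o i + m ≤ o j)
    {c d : Fin r → Fin m} {e f : Finset ℕ} (he : e ∈ signedBox L o s c)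
    (hf : f ∈ signedBox L o s d) (hef : Disjoint e f) (hcd : IncompRel (· ≤ ·) c d) :
    ∃ t : Fin r → Bool, signPattern t ≠ signPattern s ∧ FormsPattern r e f (signPattern t) := by
  have hecard := card_eq_of_mem_signedBox he
  have hfcard := card_eq_of_mem_signedBox hf
  refine ⟨relSign r e f, fun h => ?_, formsPattern_relSign hecard hfcard hef
    (fun _ _ => vertex_lt_vertex_of_mem_signedBox ho he hf)
    (fun _ _ => vertex_lt_vertex_of_mem_signedBox ho hf he)⟩
  rcases signPattern_eq_iff.1 h with h | h
  · exact hcd.1 (le_of_relSign_eq he hf h)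
  · refine hcd.2 (le_of_relSign_eq hf he ?_)
    rw [relSign_swap hecard hfcard hef, h, compl_compl]

lemma exists_card_le_zClique_and_inter_subset
    (hPs : ∀ t : Fin r → Bool, signPattern t ≠ signPattern s → signPattern t ∈ Ps)
    (ho : ∀ i j, i < j → o i + m ≤ o j) {A : Finset (Fin r → Fin m)}
    (hA : IsAntichain (· ≤ ·) (A : Set (Fin r → Fin m)))
    (hM : ∀ e ∈ M, ∀ f ∈ M, e ≠ f → Disjoint e f) :
    ∃ D ⊆ A, #D ≤ zClique r Ps M ∧
      M ∩ signedRegion L o s A ⊆ M ∩ signedRegion L o s D := by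
  set D : Finset (Fin r → Fin m) := {c ∈ A | ∃ e ∈ M, e ∈ signedBox L o s c}
  choose! rep rep_mem rep_box using fun c (hc : c ∈ D) => (mem_filter.1 hc).2
  have rep_inj : Set.InjOn rep D := fun c hc d hd hcd =>
    eq_of_mem_signedBox (rep_box c hc) (hcd ▸ rep_box d hd)
  have hclique : IsClique r Ps (D.image rep) := by
    simp only [IsClique, forall_mem_image]
    refine ⟨fun c hc => card_eq_of_mem_signedBox (rep_box c hc),
      fun c hc d hd => hM _ (rep_mem c hc) _ (rep_mem d hd), fun c hc d hd hne => ?_⟩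
    have hcA := mem_coe.2 (mem_filter.1 hc).1
    have hdA := mem_coe.2 (mem_filter.1 hd).1
    have hcd : c ≠ d := fun h => hne (congrArg rep h)
    obtain ⟨t, hts, hform⟩ := exists_formsPattern_of_incompRel ho (rep_box c hc) (rep_box d hd)
      (hM _ (rep_mem c hc) _ (rep_mem d hd) hne) ⟨hA hcA hdA hcd, hA hdA hcA hcd.symm⟩
    exact ⟨_, hPs t hts, hform⟩
  refine ⟨D, filter_subset _ _, ?_, fun e he => ?_⟩
  · rw [← card_image_of_injOn rep_inj]
    exact hclique.card_le_zClique (image_subset_iff.2 rep_mem)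
  · obtain ⟨heM, heA⟩ := mem_inter.1 he
    obtain ⟨c, hcA, hec⟩ := mem_biUnion.1 heA
    exact mem_inter.2 ⟨heM, mem_biUnion.2 ⟨c, mem_filter.2 ⟨hcA, e, heM, hec⟩, hec⟩⟩

lemma exists_isAntichain_card_eq (k : ℕ) (hm : 0 < m) :
    ∃ A : Finset (Fin (k + 1) → Fin ((k + 1) * m)),
      IsAntichain (· ≤ ·) (A : Set (Fin (k + 1) → Fin ((k + 1) * m))) ∧ #A = m ^ k := by
  have sum_le (d : Fin k → Fin m) : ∑ i, (d i : ℕ) ≤ k * m :=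
    (sum_le_card_nsmul univ _ m fun i _ => (d i).2.le).trans_eq (by simp)
  have head_lt (d : Fin k → Fin m) : k * m - ∑ i, (d i : ℕ) < (k + 1) * m := by
    rw [add_one_mul]
    omega
  -- Points of constant coordinate sum `k * m` are pairwise incomparable.
  let lift (d : Fin k → Fin m) : Fin (k + 1) → Fin ((k + 1) * m) :=
    Fin.cons ⟨k * m - ∑ i, (d i : ℕ), head_lt d⟩
      fun i => (d i).castLE (Nat.le_mul_of_pos_left m k.succ_pos)
  have eq_of_le {d d' : Fin k → Fin m} (h : lift d ≤ lift d') : d = d' := by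
    obtain ⟨hhead, htail⟩ := Fin.cons_le_cons.1 h
    have htail (i : Fin k) : (d i : ℕ) ≤ d' i := htail i
    have hsum : ∑ i, (d i : ℕ) = ∑ i, (d' i : ℕ) := by
      have := sum_le d
      have := sum_le d'
      have : k * m - ∑ i, (d i : ℕ) ≤ k * m - ∑ i, (d' i : ℕ) := hhead
      have : ∑ i, (d i : ℕ) ≤ ∑ i, (d' i : ℕ) := sum_le_sum fun i _ => htail i
      omega
    exact funext fun i =>
      Fin.ext ((sum_eq_sum_iff_of_le fun i _ => htail i).1 hsum i (mem_univ i))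
  refine ⟨univ.image lift, ?_, ?_⟩
  · simp only [coe_image, coe_univ, Set.image_univ]
    rintro _ ⟨d, rfl⟩ _ ⟨d', rfl⟩ hne hle
    exact hne (congrArg lift (eq_of_le hle))
  · rw [card_image_of_injective _ fun d d' h => eq_of_le h.le, card_univ, Fintype.card_fun,
      Fintype.card_fin, Fintype.card_fin]

end CliquesAndCells
section CliqueNumberTails

variable {r n m L : ℕ} {s : Fin r → Bool} {Ps : Set (Finset (Finset ℕ))} {T y z : ℝ}

lemma prob_le_zClique_le (hr : 2 ≤ r) (hn : 0 < n) (hPs : ∀ P ∈ Ps, IsPartitePattern r P)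
    (hs : signPattern s ∉ Ps) (hL : r * n < m * L) (hy : 0 < y) (hT : 0 ≤ T)
    (hW : Real.exp (T + 1) * (r * m ^ (r - 1) * L ^ r * (Real.exp 1 / n) ^ (r - 1)) ≤ y) :
    prob r n (fun M => y ≤ zClique r Ps M) ≤ 4 ^ m ^ (r - 1) * Real.exp (-(T * y)) := by
  have hfin : Finite (LowerSet (Fin r → Fin m)) := .of_injective _ SetLike.coe_injective
  have hregion (D : LowerSet (Fin r → Fin m)) :
      (#(signedRegion L 0 s (peaks D)) : ℝ) ≤ r * m ^ (r - 1) * L ^ r := mod_cast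
    (card_signedRegion_le L 0 s (peaks D)).trans
      (Nat.mul_le_mul_right _ (card_peaks_le (by omega) D))
  calc prob r n (fun M => y ≤ zClique r Ps M)
      ≤ prob r n (fun M => ∃ D : LowerSet (Fin r → Fin m),
          y ≤ #(M ∩ signedRegion L 0 s (peaks D))) := by
        refine prob_mono fun M hM hle => ?_
        obtain ⟨K, hKM, hK, hcard⟩ := exists_isClique_card_eq_zClique r Ps M
        have hvertex : ∀ e ∈ K, ∀ v ∈ e, v < m * L := fun e he v hv => by
          have hmem : v ∈ M.biUnion id := mem_biUnion.2 ⟨e, hKM he, hv⟩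
          rw [(mem_matchingFamilies.1 hM).2.2.2] at hmem
          exact (mem_Icc.1 hmem).2.trans_lt hL
        obtain ⟨D, hD⟩ := hK.exists_subset_signedRegion_peaks (by omega) hPs hs hvertex
        refine ⟨D, hle.trans ?_⟩
        exact_mod_cast hcard ▸ card_le_card (subset_inter hKM hD)
    _ ≤ Nat.card (LowerSet (Fin r → Fin m)) * Real.exp (-(T * y)) := by
        refine prob_exists_le_card_inter_le (by omega) hn _ hy hT fun D => le_trans ?_ hW
        gcongr
        exact hregion D
    _ ≤ 4 ^ m ^ (r - 1) * Real.exp (-(T * y)) := by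
        gcongr
        exact_mod_cast card_lowerSet_fin_arrow_fin_le hr m

variable {o : Fin r → ℕ} {A : Finset (Fin r → Fin m)}

lemma prob_zClique_lt_and_le_card_inter_le (hr : 0 < r) (hn : 0 < n)
    (hPs : ∀ t : Fin r → Bool, signPattern t ≠ signPattern s → signPattern t ∈ Ps)
    (ho : ∀ i j, i < j → o i + m ≤ o j)
    (hA : IsAntichain (· ≤ ·) (A : Set (Fin r → Fin m))) (hy : 0 < y) (hT : 0 ≤ T)
    (hW : Real.exp (T + 1) * (z * L ^ r * (Real.exp 1 / n) ^ (r - 1)) ≤ y) :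
    prob r n (fun M => zClique r Ps M < z ∧ y ≤ #(M ∩ signedRegion L o s A)) ≤
      2 ^ #A * Real.exp (-(T * y)) := by
  have hcard : Nat.card {D // D ⊆ A ∧ (#D : ℝ) < z} ≤ 2 ^ #A := by
    rw [← card_powerset, ← Nat.card_eq_finsetCard]
    exact Nat.card_le_card_of_injective (fun D => ⟨D, mem_powerset.2 D.2.1⟩)
      fun D D' h => Subtype.ext (Subtype.mk.inj h)
  calc prob r n (fun M => zClique r Ps M < z ∧ y ≤ #(M ∩ signedRegion L o s A))
      ≤ prob r n (fun M => ∃ D : {D // D ⊆ A ∧ (#D : ℝ) < z},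
          y ≤ #(M ∩ signedRegion L o s D.1)) := by
        refine prob_mono fun M hM ⟨hlt, hle⟩ => ?_
        obtain ⟨D, hDA, hDz, hsub⟩ := exists_card_le_zClique_and_inter_subset (L := L) hPs ho hA
          (mem_matchingFamilies.1 hM).2.2.1
        exact ⟨⟨D, hDA, (Nat.cast_le.2 hDz).trans_lt hlt⟩,
          hle.trans (Nat.cast_le.2 (card_le_card hsub))⟩
    _ ≤ Nat.card {D // D ⊆ A ∧ (#D : ℝ) < z} * Real.exp (-(T * y)) := by
        refine prob_exists_le_card_inter_le hr hn _ hy hT fun D => le_trans ?_ hW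
        gcongr
        calc (#(signedRegion L o s D.1) : ℝ) ≤ #D.1 * L ^ r :=
              mod_cast card_signedRegion_le L o s D.1
          _ ≤ z * L ^ r := by
              gcongr
              exact D.2.2.le
    _ ≤ 2 ^ #A * Real.exp (-(T * y)) := by
        gcongr
        exact_mod_cast hcard

lemma prob_zClique_lt_le (hr : 0 < r) (hn : 3 ≤ n)
    (hPs : ∀ t : Fin r → Bool, signPattern t ≠ signPattern s → signPattern t ∈ Ps)
    (ho : ∀ i j, i < j → o i + m ≤ o j) (ho₀ : ∀ i, 0 < o i)
    (hN : ∀ i, (o i + m) * L ≤ r * n)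
    (hA : IsAntichain (· ≤ ·) (A : Set (Fin r → Fin m))) (hy : 0 < y) (hT : 0 ≤ T)
    (hmean : 2 * y ≤ #A * L ^ r * edgeProb r n)
    (hW : Real.exp (T + 1) * (z * L ^ r * (Real.exp 1 / n) ^ (r - 1)) ≤ y) :
    prob r n (fun M => zClique r Ps M < z) ≤
      4 * (1 / (2 * y) + (((n : ℝ) / (n - 2)) ^ (r - 1) - 1)) + 2 ^ #A * Real.exp (-(T * y)) := by
  set U := signedRegion L o s A with hU
  have hUcard : (#U : ℝ) = #A * L ^ r := mod_cast card_signedRegion L ho s A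
  rw [← hUcard] at hmean
  have hU₀ : U.Nonempty := by
    rw [nonempty_iff_ne_empty]
    intro h
    simp only [h, card_empty, Nat.cast_zero, zero_mul] at hmean
    linarith
  calc prob r n (fun M => zClique r Ps M < z)
      ≤ prob r n (fun M => (#(M ∩ U) : ℝ) < #U * edgeProb r n / 2 ∨
          (zClique r Ps M < z ∧ y ≤ #(M ∩ U))) := by
        refine prob_mono fun M _ hlt => or_iff_not_imp_left.2 fun hU => ⟨hlt, ?_⟩
        linarith
    _ ≤ 4 * (1 / (#U * edgeProb r n) + (((n : ℝ) / (n - 2)) ^ (r - 1) - 1)) +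
          2 ^ #A * Real.exp (-(T * y)) :=
        prob_or_le.trans (add_le_add
          (prob_card_inter_lt_half_le hr hn (signedRegion_subset_powersetCard ho₀ hN s A) hU₀)
          (prob_zClique_lt_and_le_card_inter_le hr (by omega) hPs ho hA hy hT hW))
    _ ≤ 4 * (1 / (2 * y) + (((n : ℝ) / (n - 2)) ^ (r - 1) - 1)) +
          2 ^ #A * Real.exp (-(T * y)) := by gcongr

end CliqueNumberTails

section Asymptotics

variable {r n : ℕ}

/-- The order of magnitude `n ^ (1 - 1 / r)` of the clique number. -/
noncomputable def cliqueScale (r n : ℕ) : ℝ := (n : ℝ) ^ (1 - (1 : ℝ) / (r : ℝ))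

lemma cliqueScale_pow (hr : 0 < r) (n : ℕ) : cliqueScale r n ^ r = (n : ℝ) ^ (r - 1) := by
  rw [cliqueScale, ← Real.rpow_natCast, ← Real.rpow_mul n.cast_nonneg, ← Real.rpow_natCast,
    Nat.cast_pred hr]
  congr 1
  field_simp

lemma one_le_cliqueScale (hr : 0 < r) (hn : 0 < n) : 1 ≤ cliqueScale r n := by
  refine Real.one_le_rpow (mod_cast hn) (sub_nonneg.2 ?_)
  exact div_le_one_of_le₀ (mod_cast hr) r.cast_nonneg

lemma tendsto_cliqueScale (hr : 2 ≤ r) : Filter.Tendsto (cliqueScale r) .atTop .atTop := by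
  have hr' : (2 : ℝ) ≤ r := mod_cast hr
  refine (tendsto_rpow_atTop ?_).comp tendsto_natCast_atTop_atTop
  rw [sub_pos, div_lt_one (by linarith)]
  linarith

lemma exists_cliqueScale_approx (hr : 0 < r) (hn : 0 < n) :
    ∃ m : ℕ, 0 < m ∧ cliqueScale r n ≤ (m : ℝ) ^ (r - 1) ∧
      (m : ℝ) ^ (r - 1) ≤ 2 ^ (r - 1) * cliqueScale r n ∧
      n ≤ m * cliqueScale r n ∧ m * cliqueScale r n ≤ 2 * n := by
  set a : ℝ := (n : ℝ) ^ ((1 : ℝ) / r) with ha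
  have hn' : (0 : ℝ) < n := mod_cast hn
  have one_le_a : 1 ≤ a := Real.one_le_rpow (mod_cast hn) (by positivity)
  have a_pos : 0 < a := by linarith
  have a_pow : a ^ (r - 1) = cliqueScale r n := by
    rw [ha, cliqueScale, ← Real.rpow_natCast, ← Real.rpow_mul hn'.le, Nat.cast_pred hr]
    congr 1
    field_simp
  have a_mul : a * cliqueScale r n = n := by
    rw [ha, cliqueScale, ← Real.rpow_add hn', add_sub_cancel, Real.rpow_one]
  have hlow : a ≤ ⌈a⌉₊ := Nat.le_ceil a
  have hhigh : (⌈a⌉₊ : ℝ) ≤ 2 * a := by linarith [Nat.ceil_lt_add_one a_pos.le]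
  refine ⟨⌈a⌉₊, Nat.ceil_pos.2 a_pos, ?_, ?_, ?_, ?_⟩
  · rw [← a_pow]
    gcongr
  · rw [← a_pow, ← mul_pow]
    gcongr
  · rw [← a_mul]
    gcongr
    exact a_pow ▸ (pow_pos a_pos _).le
  · rw [← a_mul, ← mul_assoc]
    gcongr
    exact a_pow ▸ (pow_pos a_pos _).le

lemma two_pow_le_exp (k : ℕ) : (2 : ℝ) ^ k ≤ Real.exp k := by
  rw [← mul_one (k : ℝ), Real.exp_nat_mul]
  gcongr
  linarith [Real.add_one_le_exp (1 : ℝ)]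

end Asymptotics

section UpperBound

variable {r n : ℕ} {s : Fin r → Bool} {Ps : Set (Finset (Finset ℕ))}

/-- The expected number of edges in the boundary region of a lower set of cells is at most this
multiple of `cliqueScale`. -/
noncomputable def boundaryConst (r : ℕ) : ℝ :=
  r * 2 ^ (r - 1) * (r + 1) ^ r * Real.exp 1 ^ (r - 1)

/-- The constant in the upper bound for the clique number. -/
noncomputable def upperConst (r : ℕ) : ℝ := 2 * 2 ^ (r - 1) + 1 + Real.exp 2 * boundaryConst r

lemma boundaryConst_nonneg (r : ℕ) : 0 ≤ boundaryConst r := by unfold boundaryConst; positivity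

lemma upperConst_pos (r : ℕ) : 0 < upperConst r := by
  have := boundaryConst_nonneg r
  unfold upperConst
  positivity

lemma boundary_mean_le {L m : ℕ} (hr : 0 < r) (hn : 0 < n)
    (hm : (m : ℝ) ^ (r - 1) ≤ 2 ^ (r - 1) * cliqueScale r n)
    (hL : (L : ℝ) ≤ (r + 1) * cliqueScale r n) :
    (r * m ^ (r - 1) * L ^ r * (Real.exp 1 / n) ^ (r - 1) : ℝ) ≤
      boundaryConst r * cliqueScale r n := by
  have hθ : 0 < cliqueScale r n := zero_lt_one.trans_le (one_le_cliqueScale hr hn)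
  rw [div_pow, ← cliqueScale_pow hr n, boundaryConst]
  calc (r * m ^ (r - 1) * L ^ r * (Real.exp 1 ^ (r - 1) / cliqueScale r n ^ r) : ℝ)
      ≤ r * (2 ^ (r - 1) * cliqueScale r n) * ((r + 1) * cliqueScale r n) ^ r *
          (Real.exp 1 ^ (r - 1) / cliqueScale r n ^ r) := by gcongr
    _ = r * 2 ^ (r - 1) * (r + 1) ^ r * Real.exp 1 ^ (r - 1) * cliqueScale r n := by
        rw [mul_pow]
        field_simp

lemma four_pow_mul_exp_neg_upperConst_le {m : ℕ} (hr : 0 < r) (hn : 0 < n)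
    (hm : (m : ℝ) ^ (r - 1) ≤ 2 ^ (r - 1) * cliqueScale r n) :
    4 ^ m ^ (r - 1) * Real.exp (-(upperConst r * cliqueScale r n)) ≤
      Real.exp (-cliqueScale r n) := by
  have hθ := one_le_cliqueScale hr hn
  have hA := boundaryConst_nonneg r
  have hpow : (4 : ℝ) ^ m ^ (r - 1) ≤ Real.exp (2 * (2 ^ (r - 1) * cliqueScale r n)) := by
    rw [show (4 : ℝ) = 2 ^ 2 by norm_num, ← pow_mul]
    refine (two_pow_le_exp _).trans (Real.exp_le_exp.2 ?_)
    push_cast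
    gcongr
  have hconst : (2 * 2 ^ (r - 1) + 1) * cliqueScale r n ≤ upperConst r * cliqueScale r n := by
    gcongr
    exact le_add_of_nonneg_right (by positivity)
  calc 4 ^ m ^ (r - 1) * Real.exp (-(upperConst r * cliqueScale r n))
      ≤ Real.exp (2 * (2 ^ (r - 1) * cliqueScale r n)) *
          Real.exp (-((2 * 2 ^ (r - 1) + 1) * cliqueScale r n)) := by gcongr
    _ = Real.exp (-cliqueScale r n) := by
        rw [← Real.exp_add]
        ring_nf

lemma prob_upperConst_mul_le_zClique_le (hr : 2 ≤ r) (hn : 0 < n)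
    (hPs : ∀ P ∈ Ps, IsPartitePattern r P) (hs : signPattern s ∉ Ps) :
    prob r n (fun M => upperConst r * cliqueScale r n ≤ zClique r Ps M) ≤
      Real.exp (-cliqueScale r n) := by
  have hr₀ : 0 < r := by omega
  obtain ⟨m, hm, -, hmhigh, hnlow, -⟩ := exists_cliqueScale_approx hr₀ hn
  have hθ₁ := one_le_cliqueScale hr₀ hn
  set θ := cliqueScale r n
  have hL : ((r * n / m + 1 : ℕ) : ℝ) ≤ (r + 1) * θ := by
    have hdiv : ((r * n / m : ℕ) : ℝ) ≤ r * θ := by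
      refine Nat.cast_div_le.trans ?_
      rw [div_le_iff₀ (mod_cast hm), Nat.cast_mul, mul_assoc, mul_comm θ]
      gcongr
    push_cast
    linarith
  have hW : Real.exp (1 + 1) * (r * m ^ (r - 1) * (r * n / m + 1 : ℕ) ^ r *
      (Real.exp 1 / n) ^ (r - 1)) ≤ upperConst r * θ := by
    rw [one_add_one_eq_two]
    calc _ ≤ Real.exp 2 * (boundaryConst r * θ) :=
          mul_le_mul_of_nonneg_left (boundary_mean_le hr₀ hn hmhigh hL) (Real.exp_nonneg 2)
      _ ≤ upperConst r * θ := by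
          rw [← mul_assoc]
          gcongr
          exact le_add_of_nonneg_left (by positivity)
  calc prob r n (fun M => upperConst r * θ ≤ zClique r Ps M)
      ≤ 4 ^ m ^ (r - 1) * Real.exp (-(1 * (upperConst r * θ))) :=
        prob_le_zClique_le hr hn hPs hs (Nat.lt_mul_div_succ _ hm)
          (mul_pos (upperConst_pos r) (by linarith)) zero_le_one hW
    _ ≤ Real.exp (-θ) := by
        rw [one_mul]
        exact four_pow_mul_exp_neg_upperConst_le hr₀ hn hmhigh

theorem tendsto_prob_not_zClique_le (hr : 2 ≤ r) (hPs : ∀ P ∈ Ps, IsPartitePattern r P)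
    (hs : signPattern s ∉ Ps) :
    Filter.Tendsto
      (fun n => prob r n (fun M => ¬(zClique r Ps M : ℝ) ≤ upperConst r * cliqueScale r n))
      Filter.atTop (nhds 0) := by
  refine squeeze_zero' (.of_forall fun _ => prob_nonneg) ?_
    (Real.tendsto_exp_neg_atTop_nhds_zero.comp (tendsto_cliqueScale hr))
  filter_upwards [Filter.eventually_gt_atTop 0] with n hn
  exact (prob_mono fun M _ h => (not_le.1 h).le).trans
    (prob_upperConst_mul_le_zClique_le hr hn hPs hs)

end UpperBound

section LowerBound

variable {r n : ℕ} {s : Fin r → Bool} {Ps : Set (Finset (Finset ℕ))}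

/-- The expected number of edges in the region of the antichain of cells is at least this multiple
of `cliqueScale`. -/
noncomputable def antichainConst (r : ℕ) : ℝ := ((8 * r) ^ r * r ^ (r - 1))⁻¹

/-- The exponential tail parameter that beats the union bound over subsets of the antichain. -/
noncomputable def tailRate (r : ℕ) : ℝ := 2 * (2 ^ (r - 1) + 1) / antichainConst r

/-- The constant in the lower bound for the clique number. -/
noncomputable def lowerConst (r : ℕ) : ℝ :=
  antichainConst r / (2 * Real.exp (tailRate r + 1) * Real.exp 1 ^ (r - 1))

lemma antichainConst_pos (hr : 0 < r) : 0 < antichainConst r := by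
  unfold antichainConst
  positivity

lemma tailRate_pos (hr : 0 < r) : 0 < tailRate r := by
  have := antichainConst_pos hr
  unfold tailRate
  positivity

lemma lowerConst_pos (hr : 0 < r) : 0 < lowerConst r := by
  have := antichainConst_pos hr
  unfold lowerConst
  positivity

lemma exists_interval_length {m : ℕ} (hr : 0 < r) (hm : 0 < m)
    (hθ : 8 * r ≤ cliqueScale r n) (hlow : n ≤ m * cliqueScale r n)
    (hhigh : m * cliqueScale r n ≤ 2 * n) :
    ∃ L : ℕ, 2 * r * m * L ≤ n ∧ cliqueScale r n / (8 * r) ≤ L ∧ L ≤ cliqueScale r n := by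
  set θ := cliqueScale r n
  have hr₁ : (1 : ℝ) ≤ r := mod_cast hr
  have hm' : (0 : ℝ) < m := mod_cast hm
  have hd : 0 < 2 * r * m := by positivity
  refine ⟨n / (2 * r * m), Nat.mul_div_le n _, ?_, ?_⟩
  · have hlt : (n : ℝ) < 2 * r * m * ((n / (2 * r * m) : ℕ) + 1) :=
      mod_cast Nat.lt_mul_div_succ n hd
    have hθlt : θ < 4 * r * ((n / (2 * r * m) : ℕ) + 1) := by
      refine lt_of_mul_lt_mul_left ?_ hm'.le
      linarith
    rw [div_le_iff₀ (by positivity)]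
    linarith
  · refine Nat.cast_div_le.trans ((div_le_iff₀ (mod_cast hd)).2 (hlow.trans ?_))
    push_cast
    nlinarith [mul_pos hm' (show 0 < θ by linarith)]

lemma antichainConst_mul_le_mean {m L : ℕ} (hr : 0 < r) (hn : 0 < n)
    (hm : cliqueScale r n ≤ (m : ℝ) ^ (r - 1)) (hL : cliqueScale r n / (8 * r) ≤ L) :
    antichainConst r * cliqueScale r n ≤ m ^ (r - 1) * L ^ r * edgeProb r n := by
  have hθ : 0 < cliqueScale r n := zero_lt_one.trans_le (one_le_cliqueScale hr hn)
  calc antichainConst r * cliqueScale r n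
      = cliqueScale r n * (cliqueScale r n / (8 * r)) ^ r * ((r * n : ℝ) ^ (r - 1))⁻¹ := by
        rw [mul_pow (r : ℝ), ← cliqueScale_pow hr n, antichainConst, div_pow]
        field_simp
    _ ≤ m ^ (r - 1) * L ^ r * edgeProb r n := by
        gcongr
        exact inv_pow_le_edgeProb hn

lemma lowerConst_mean_le {L : ℕ} (hr : 0 < r) (hn : 0 < n) (hL : L ≤ cliqueScale r n) :
    Real.exp (tailRate r + 1) *
        (lowerConst r * cliqueScale r n * L ^ r * (Real.exp 1 / n) ^ (r - 1)) ≤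
      antichainConst r * cliqueScale r n / 2 := by
  have hθ : 0 < cliqueScale r n := zero_lt_one.trans_le (one_le_cliqueScale hr hn)
  have hδ := lowerConst_pos hr
  rw [div_pow, ← cliqueScale_pow hr n]
  calc Real.exp (tailRate r + 1) * (lowerConst r * cliqueScale r n * L ^ r *
        (Real.exp 1 ^ (r - 1) / cliqueScale r n ^ r))
      ≤ Real.exp (tailRate r + 1) * (lowerConst r * cliqueScale r n * cliqueScale r n ^ r *
        (Real.exp 1 ^ (r - 1) / cliqueScale r n ^ r)) := by gcongr
    _ = antichainConst r * cliqueScale r n / 2 := by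
        rw [lowerConst]
        field_simp

lemma two_pow_mul_exp_neg_tailRate_le {m : ℕ} (hr : 0 < r)
    (hm : (m : ℝ) ^ (r - 1) ≤ 2 ^ (r - 1) * cliqueScale r n) :
    2 ^ m ^ (r - 1) * Real.exp (-(tailRate r * (antichainConst r * cliqueScale r n / 2))) ≤
      Real.exp (-cliqueScale r n) := by
  have hpow : (2 : ℝ) ^ m ^ (r - 1) ≤ Real.exp (2 ^ (r - 1) * cliqueScale r n) :=
    (two_pow_le_exp _).trans (Real.exp_le_exp.2 (mod_cast hm))
  have hrate : tailRate r * (antichainConst r * cliqueScale r n / 2) =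
      (2 ^ (r - 1) + 1) * cliqueScale r n := by
    have := (antichainConst_pos hr).ne'
    rw [tailRate]
    field_simp
  calc 2 ^ m ^ (r - 1) * Real.exp (-(tailRate r * (antichainConst r * cliqueScale r n / 2)))
      ≤ Real.exp (2 ^ (r - 1) * cliqueScale r n) *
          Real.exp (-((2 ^ (r - 1) + 1) * cliqueScale r n)) := by
        rw [hrate]
        gcongr
    _ = Real.exp (-cliqueScale r n) := by
        rw [← Real.exp_add]
        ring_nf

lemma exists_interval_offsets {w L : ℕ} (hw : 0 < w) (hL : 2 * w * L ≤ n) :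
    ∃ o : Fin r → ℕ, (∀ i j, i < j → o i + w ≤ o j) ∧ (∀ i, 0 < o i) ∧
      ∀ i, (o i + w) * L ≤ r * n := by
  refine ⟨fun i => i * w + 1, fun i j hij => ?_, fun i => Nat.succ_pos _, fun i => ?_⟩
  · have := Nat.mul_le_mul_right w (show (i : ℕ) + 1 ≤ j from hij)
    dsimp only
    linarith
  · have hi : ((i : ℕ) + 1) * w ≤ r * w := Nat.mul_le_mul_right w i.2
    have hle : (i : ℕ) * w + 1 + w ≤ r * (2 * w) := by
      have := Nat.mul_le_mul_right w (i.pos : 0 < r)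
      rw [add_one_mul] at hi
      rw [mul_left_comm]
      omega
    calc ((i : ℕ) * w + 1 + w) * L ≤ r * (2 * w) * L := Nat.mul_le_mul_right L hle
      _ = r * (2 * w * L) := by ring
      _ ≤ r * n := Nat.mul_le_mul_left r hL

lemma prob_zClique_lt_lowerConst_mul_le (hr : 0 < r) (hn : 3 ≤ n)
    (hθ : 8 * r ≤ cliqueScale r n)
    (hPs : ∀ t : Fin r → Bool, signPattern t ≠ signPattern s → signPattern t ∈ Ps) :
    prob r n (fun M => zClique r Ps M < lowerConst r * cliqueScale r n) ≤
      4 * (1 / (antichainConst r * cliqueScale r n) + (((n : ℝ) / (n - 2)) ^ (r - 1) - 1)) +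
        Real.exp (-cliqueScale r n) := by
  obtain ⟨m, hm, hmlow, hmhigh, hnlow, hnhigh⟩ := exists_cliqueScale_approx hr (by omega : 0 < n)
  obtain ⟨L, hLn, hLlow, hLhigh⟩ := exists_interval_length hr hm hθ hnlow hnhigh
  obtain ⟨o, ho, ho₀, hoN⟩ := exists_interval_offsets (r := r) (Nat.mul_pos hr hm)
    (by rwa [← mul_assoc] : 2 * (r * m) * L ≤ n)
  obtain ⟨A, hA, hAcard⟩ : ∃ A : Finset (Fin r → Fin (r * m)),
      IsAntichain (· ≤ ·) (A : Set (Fin r → Fin (r * m))) ∧ #A = m ^ (r - 1) := by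
    obtain ⟨k, rfl⟩ := Nat.exists_eq_succ_of_ne_zero hr.ne'
    exact exists_isAntichain_card_eq k hm
  have hy : 0 < antichainConst r * cliqueScale r n / 2 :=
    half_pos (mul_pos (antichainConst_pos hr)
      (zero_lt_one.trans_le (one_le_cliqueScale hr (by omega))))
  have hmean : 2 * (antichainConst r * cliqueScale r n / 2) ≤ #A * L ^ r * edgeProb r n := by
    rw [mul_div_cancel₀ _ two_ne_zero, hAcard, Nat.cast_pow]
    exact antichainConst_mul_le_mean hr (by omega) hmlow hLlow
  have htail := prob_zClique_lt_le hr hn hPs ho ho₀ hoN hA hy (tailRate_pos hr).le hmean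
    (lowerConst_mean_le hr (by omega) hLhigh)
  rw [mul_div_cancel₀ _ two_ne_zero, hAcard] at htail
  exact htail.trans (add_le_add_right (two_pow_mul_exp_neg_tailRate_le hr hmhigh) _)

lemma tendsto_div_sub_two_pow_sub_one (k : ℕ) :
    Filter.Tendsto (fun n : ℕ => ((n : ℝ) / (n - 2)) ^ k - 1) Filter.atTop (nhds 0) := by
  have hratio : Filter.Tendsto (fun n : ℕ => (n : ℝ) / (n - 2)) Filter.atTop (nhds 1) := by
    simpa only [sub_eq_add_neg] using tendsto_natCast_div_add_atTop (-2 : ℝ)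
  simpa only [one_pow, sub_self] using (hratio.pow k).sub_const 1

theorem tendsto_prob_not_le_zClique (hr : 2 ≤ r)
    (hPs : ∀ t : Fin r → Bool, signPattern t ≠ signPattern s → signPattern t ∈ Ps) :
    Filter.Tendsto
      (fun n => prob r n (fun M => ¬lowerConst r * cliqueScale r n ≤ (zClique r Ps M : ℝ)))
      Filter.atTop (nhds 0) := by
  have hr₀ : 0 < r := by omega
  have hθ := tendsto_cliqueScale hr
  have hmean : Filter.Tendsto (fun n => 1 / (antichainConst r * cliqueScale r n))
      Filter.atTop (nhds 0) :=
    tendsto_const_nhds.div_atTop (hθ.const_mul_atTop (antichainConst_pos hr₀))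
  have hbound : Filter.Tendsto (fun n : ℕ => 4 * (1 / (antichainConst r * cliqueScale r n) +
        (((n : ℝ) / (n - 2)) ^ (r - 1) - 1)) + Real.exp (-cliqueScale r n))
      Filter.atTop (nhds 0) := by
    simpa only [add_zero, mul_zero, Function.comp_def] using
      ((hmean.add (tendsto_div_sub_two_pow_sub_one (r - 1))).const_mul 4).add
        (Real.tendsto_exp_neg_atTop_nhds_zero.comp hθ)
  refine squeeze_zero' (.of_forall fun _ => prob_nonneg) ?_ hbound
  filter_upwards [Filter.eventually_ge_atTop 3, hθ.eventually_ge_atTop (8 * r)] with n hn hθn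
  simpa only [not_le] using prob_zClique_lt_lowerConst_mul_le hr₀ hn hθn hPs

end LowerBound

/-- **Proposition (all but one r-partite pattern).** For every `r ≥ 2` and every set `Ps` of
`r`-partite `r`-patterns with `|Ps| = 2^(r−1) − 1`, a.a.s. `z_Ps(RM_n^(r)) = Θ(n^(1−1/r))`. -/
theorem aas_partite_minus_one (r : ℕ) (hr : 2 ≤ r) (Ps : Finset (Finset (Finset ℕ)))
    (hPs : ∀ P ∈ Ps, IsPartitePattern r P) (hcard : Ps.card = 2 ^ (r - 1) - 1) :
    ∃ c₁ c₂ : ℝ, 0 < c₁ ∧ 0 < c₂ ∧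
      Filter.Tendsto
        (fun n : ℕ => prob r n (fun M =>
          c₁ * (n : ℝ) ^ (1 - (1 : ℝ) / (r : ℝ)) ≤ (zClique r ↑Ps M : ℝ) ∧
          (zClique r ↑Ps M : ℝ) ≤ c₂ * (n : ℝ) ^ (1 - (1 : ℝ) / (r : ℝ))))
        Filter.atTop (nhds 1) := by
  have hr₀ : 0 < r := by omega
  obtain ⟨s, hs⟩ := exists_unique_missing_signPattern hr₀ hPs hcard
  have hlower := tendsto_prob_not_le_zClique (Ps := (Ps : Set (Finset (Finset ℕ)))) hr
    fun t ht => mem_coe.2 ((hs t).2 ht)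
  have hupper := tendsto_prob_not_zClique_le (Ps := (Ps : Set (Finset (Finset ℕ)))) hr hPs
    fun h => (hs s).1 (mem_coe.1 h) rfl
  exact ⟨lowerConst r, upperConst r, lowerConst_pos hr₀, upperConst_pos r,
    tendsto_prob_and hr₀ hlower hupper⟩
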